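/- Unique ergodicity of cellular automata is undecidable: there is no total computable function g from codes (n, f) (of radius-1 cellular automata Φ_{n,f}) to Bool such that g(n,f) = true if and only if Φ_{n,f} is uniquely ergodic. -/

import Mathlib

open MeasureTheory

/-- The radius-1 cellular automaton induced by a local rule `f`. -/
def caOfRule {n : ℕ} (f : Fin (n + 1) × Fin (n + 1) × Fin (n + 1) → Fin (n + 1)) :
    (ℤ → Fin (n + 1)) → (ℤ → Fin (n + 1)) :=
  fun x i => f (x (i - 1), x i, x (i + 1))

namespace CAUE

section Ergodic
open Filter Topology

variable {n : ℕ} (f : Fin (n + 1) × Fin (n + 1) × Fin (n + 1) → Fin (n + 1))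

lemma ca_continuous : Continuous (caOfRule f) := by
  unfold caOfRule
  refine continuous_pi fun i => ?_
  have : Continuous f := continuous_of_discreteTopology
  exact this.comp (by fun_prop)

lemma ca_measurable : Measurable (caOfRule f) := by
  unfold caOfRule
  refine measurable_pi_lambda _ fun i => ?_
  have : Measurable f := measurable_of_finite f
  exact this.comp (by fun_prop)

/-- being an invariant probability measure -/
def Inv (μ : Measure (ℤ → Fin (n + 1))) : Prop :=
  IsProbabilityMeasure μ ∧ ∀ A : Set (ℤ → Fin (n + 1)), MeasurableSet A →
              μ (caOfRule f ⁻¹' A) = μ A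

lemma ca_zero (h0 : f (0, 0, 0) = 0) : caOfRule f (fun _ => 0) = fun _ => 0 := by
  funext i; exact h0

lemma inv_dirac (h0 : f (0, 0, 0) = 0) : Inv f (Measure.dirac (fun _ => 0)) := by
  refine ⟨inferInstance, fun A hA => ?_⟩
  rw [Measure.dirac_apply' _ hA, Measure.dirac_apply' _ (ca_measurable f hA)]
  by_cases h : (fun _ => 0 : ℤ → Fin (n+1)) ∈ A
  · have : (fun _ => 0 : ℤ → Fin (n+1)) ∈ caOfRule f ⁻¹' A := by
      rw [Set.mem_preimage, ca_zero f h0]; exact h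
    simp [h, this]
  · have : (fun _ => 0 : ℤ → Fin (n+1)) ∉ caOfRule f ⁻¹' A := by
      rw [Set.mem_preimage, ca_zero f h0]; exact h
    simp [h, this]

lemma inv_iter {μ : Measure (ℤ → Fin (n + 1))} (hμ : Inv f μ) (N : ℕ)
    (A : Set (ℤ → Fin (n + 1))) (hA : MeasurableSet A) :
    μ ((caOfRule f)^[N] ⁻¹' A) = μ A := by
  induction N generalizing A with
  | zero => simp
  | succ N ih =>
    rw [Function.iterate_succ', Set.preimage_comp, ih _ (ca_measurable f hA), hμ.2 A hA]

lemma inv_eq_dirac (hnil : ∀ x i, ∃ T, ∀ N, T ≤ N → ((caOfRule f)^[N] x) i = 0)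
    {μ : Measure (ℤ → Fin (n + 1))} (hμ : Inv f μ) : μ = Measure.dirac (fun _ => 0) := by
  have := hμ.1
  have hm : ∀ i, MeasurableSet {x : ℤ → Fin (n+1) | x i ≠ 0} := by
    intro i
    exact (measurable_pi_apply i) (MeasurableSet.of_discrete (s := {y | y ≠ 0}))
  have key : ∀ i, μ {x | x i ≠ 0} = 0 := by
    intro i
    set C : ℕ → Set (ℤ → Fin (n+1)) := fun N => ⋃ M, (caOfRule f)^[N + M] ⁻¹' {x | x i ≠ 0}
    have hC : ∀ N, MeasurableSet (C N) := fun N => MeasurableSet.iUnion fun M =>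
      (ca_measurable f).iterate _ (hm i)
    have hanti : Antitone C := by
      intro a b hab x hx
      simp only [C, Set.mem_iUnion] at hx ⊢
      obtain ⟨M, hM⟩ := hx
      refine ⟨b - a + M, ?_⟩
      have : a + (b - a + M) = b + M := by omega
      rw [this]; exact hM
    have hinter : ⋂ N, C N = ∅ := by
      ext x
      simp only [Set.mem_iInter, Set.mem_empty_iff_false, iff_false, not_forall]
      obtain ⟨T, hT⟩ := hnil x i
      refine ⟨T, ?_⟩
      simp only [C, Set.mem_iUnion, not_exists]
      intro M hM
      exact hM (hT _ (by omega))
    have ht := tendsto_measure_iInter_atTop (μ := μ) (fun N => (hC N).nullMeasurableSet) hanti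
      ⟨0, measure_ne_top _ _⟩
    rw [hinter, measure_empty] at ht
    have hle : ∀ N, μ {x | x i ≠ 0} ≤ μ (C N) := by
      intro N
      rw [← inv_iter f hμ N _ (hm i)]
      exact measure_mono (Set.subset_iUnion_of_subset 0 (by simp))
    exact le_antisymm (ge_of_tendsto' ht hle) bot_le
  have h0 : μ {(fun _ => 0 : ℤ → Fin (n+1))}ᶜ = 0 := by
    refine measure_mono_null (t := ⋃ i, {x | x i ≠ 0}) ?_ (measure_iUnion_null key)
    intro x hx
    by_contra h
    simp only [Set.mem_iUnion, not_exists, Set.mem_ofPred_eq, not_not] at h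
    exact hx (funext h)
  ext A hA
  rw [Measure.dirac_apply' _ hA]
  by_cases h : (fun _ => 0 : ℤ → Fin (n+1)) ∈ A
  · simp only [h, Set.indicator_of_mem, Pi.one_apply]
    rw [← prob_compl_eq_zero_iff hA]
    exact measure_mono_null (by intro x hx hx'; exact hx (hx' ▸ h)) h0
  · simp only [h, not_false_eq_true, Set.indicator_of_notMem]
    exact measure_mono_null (by intro x hx hx'; exact h (hx' ▸ hx)) h0

/-- averaged orbit measure -/
noncomputable def avg (x : ℤ → Fin (n + 1)) (N : ℕ) : Measure (ℤ → Fin (n + 1)) :=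
  ((N : ENNReal) + 1)⁻¹ • ∑ k ∈ Finset.range (N + 1), Measure.dirac ((caOfRule f)^[k] x)

lemma avg_prob (x : ℤ → Fin (n + 1)) (N : ℕ) : IsProbabilityMeasure (avg f x N) := by
  constructor
  simp only [avg, Measure.smul_apply, Measure.coe_finsetSum, Finset.sum_apply, measure_univ,
    Finset.sum_const, Finset.card_range, smul_eq_mul, nsmul_eq_mul, mul_one]
  push_cast
  exact ENNReal.inv_mul_cancel (by simp) (by simp)

lemma avg_apply (x : ℤ → Fin (n + 1)) (N : ℕ) (A : Set (ℤ → Fin (n + 1)))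
    (hA : MeasurableSet A) :
    (avg f x N A) = ((N : ENNReal) + 1)⁻¹ *
      ∑ k ∈ Finset.range (N + 1), A.indicator 1 ((caOfRule f)^[k] x) := by
  simp only [avg, Measure.smul_apply, Measure.coe_finsetSum, Finset.sum_apply, smul_eq_mul]
  congr 1
  exact Finset.sum_congr rfl fun k _ => Measure.dirac_apply' _ hA

lemma avg_step (x : ℤ → Fin (n + 1)) (N : ℕ) (A : Set (ℤ → Fin (n + 1)))
    (hA : MeasurableSet A) :
    avg f x N (caOfRule f ⁻¹' A) ≤ avg f x N A + ((N : ENNReal) + 1)⁻¹ ∧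
    avg f x N A ≤ avg f x N (caOfRule f ⁻¹' A) + ((N : ENNReal) + 1)⁻¹ := by
  rw [avg_apply f x N A hA, avg_apply f x N _ (ca_measurable f hA)]
  have e : ∀ k, (caOfRule f ⁻¹' A).indicator (1 : (ℤ → Fin (n + 1)) → ENNReal) ((caOfRule f)^[k] x)
      = A.indicator 1 ((caOfRule f)^[k+1] x) := by
    intro k
    rw [Function.iterate_succ_apply']
    rfl
  simp_rw [e]
  have hle : ∀ k, A.indicator (1 : (ℤ → Fin (n + 1)) → ENNReal) ((caOfRule f)^[k] x) ≤ 1 := by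
    intro k; exact Set.indicator_le (fun _ _ => le_rfl) _
  set u : ℕ → ENNReal := fun k => A.indicator (1 : (ℤ → Fin (n + 1)) → ENNReal) ((caOfRule f)^[k] x) with hu
  have s1 : ∑ k ∈ Finset.range (N+1), u (k+1) + u 0 = ∑ k ∈ Finset.range (N+1), u k + u (N+1) := by
    rw [← Finset.sum_range_succ', Finset.sum_range_succ]
  constructor
  · calc _ ≤ ((N : ENNReal) + 1)⁻¹ * (∑ k ∈ Finset.range (N+1), u k + 1) := by
          gcongr
          calc _ ≤ ∑ k ∈ Finset.range (N+1), u (k+1) + u 0 := le_self_add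
            _ ≤ _ := by rw [s1]; gcongr; exact hle _
      _ = _ := by rw [mul_add, mul_one]
  · calc _ ≤ ((N : ENNReal) + 1)⁻¹ * (∑ k ∈ Finset.range (N+1), u (k+1) + 1) := by
          gcongr
          calc _ ≤ ∑ k ∈ Finset.range (N+1), u k + u (N+1) := le_self_add
            _ ≤ _ := by rw [← s1]; gcongr; exact hle _
      _ = _ := by rw [mul_add, mul_one]

lemma exists_inv (x : ℤ → Fin (n + 1)) (hx : ∀ N i, ((caOfRule f)^[N] x) i ≠ 0) :
    ∃ ν : Measure (ℤ → Fin (n + 1)), Inv f ν ∧ ν {y | y 0 ≠ 0} = 1 := by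
  let P : ℕ → ProbabilityMeasure (ℤ → Fin (n + 1)) := fun N => ⟨avg f x N, avg_prob f x N⟩
  obtain ⟨ν, -, hν⟩ := (isCompact_univ (X := ProbabilityMeasure (ℤ → Fin (n + 1)))).ultrafilter_le_nhds
    ((hyperfilter ℕ).map P) (by simp)
  have ht : Tendsto P (hyperfilter ℕ) (𝓝 ν) := hν
  have hcl : ∀ A : Set (ℤ → Fin (n + 1)), IsClopen A →
      Tendsto (fun N => avg f x N A) (hyperfilter ℕ) (𝓝 ((ν : Measure _) A)) := by
    intro A hA
    exact ProbabilityMeasure.tendsto_measure_of_null_frontier_of_tendsto' ht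
      (by rw [hA.frontier_eq]; simp)
  have hinv0 : Tendsto (fun N : ℕ => ((N : ENNReal) + 1)⁻¹) (hyperfilter ℕ) (𝓝 0) := by
    have h1 : Tendsto (fun N : ℕ => ((N : ENNReal) + 1)⁻¹) atTop (𝓝 0) := by
      have := (tendsto_add_atTop_iff_nat 1).2 ENNReal.tendsto_inv_nat_nhds_zero
      simpa using this
    exact h1.mono_left Nat.hyperfilter_le_atTop
  have hinvc : ∀ A : Set (ℤ → Fin (n + 1)), IsClopen A →
      (ν : Measure _) (caOfRule f ⁻¹' A) = (ν : Measure _) A := by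
    intro A hA
    have hA' := hA.preimage (ca_continuous f)
    apply le_antisymm
    · have := (hcl A hA).add hinv0
      rw [add_zero] at this
      exact le_of_tendsto_of_tendsto' (hcl _ hA') this
        (fun N => (avg_step f x N A hA.isOpen.measurableSet).1)
    · have := (hcl _ hA').add hinv0
      rw [add_zero] at this
      exact le_of_tendsto_of_tendsto' (hcl A hA) this
        (fun N => (avg_step f x N A hA.isOpen.measurableSet).2)
  refine ⟨ν, ⟨inferInstance, ?_⟩, ?_⟩
  · have : (ν : Measure _).map (caOfRule f) = ν := by
      have := Measure.isProbabilityMeasure_map (μ := (ν : Measure _)) (ca_measurable f).aemeasurable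
      refine ext_of_generate_finite (measurableCylinders fun _ : ℤ => Fin (n+1))
        (generateFrom_measurableCylinders).symm isPiSystem_measurableCylinders ?_ (by simp)
      intro A hA
      obtain ⟨s, S, hS, rfl⟩ := (mem_measurableCylinders _).1 hA
      have hc : IsClopen (cylinder s S : Set (ℤ → Fin (n+1))) :=
        (isClopen_discrete S).preimage (by fun_prop)
      rw [Measure.map_apply (ca_measurable f) hc.isOpen.measurableSet, hinvc _ hc]
    intro A hA
    conv_rhs => rw [← this, Measure.map_apply (ca_measurable f) hA]
  · have hc : IsClopen {y : ℤ → Fin (n+1) | y 0 ≠ 0} :=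
      (isClopen_discrete {z : Fin (n+1) | z ≠ 0}).preimage (continuous_apply 0)
    have h1 := hcl _ hc
    have h2 : ∀ N, avg f x N {y : ℤ → Fin (n+1) | y 0 ≠ 0} = 1 := by
      intro N
      rw [avg_apply f x N _ hc.isOpen.measurableSet, Finset.sum_congr rfl (g := fun _ => 1)]
      · simp only [Finset.sum_const, Finset.card_range, nsmul_eq_mul, mul_one]
        push_cast
        exact ENNReal.inv_mul_cancel (by simp) (by simp)
      · intro k _
        rw [Set.indicator_of_mem]
        · rfl
        · exact hx k 0
    simp_rw [h2] at h1
    exact tendsto_nhds_unique h1 tendsto_const_nhds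

/-- Unique ergodicity for CA with spreading blank state. -/
theorem uniquely_ergodic_iff (hb : ∀ l m r, l = 0 ∨ m = 0 ∨ r = 0 → f (l, m, r) = 0) :
    (∃! μ : Measure (ℤ → Fin (n + 1)), IsProbabilityMeasure μ ∧
            ∀ A : Set (ℤ → Fin (n + 1)), MeasurableSet A →
              μ (caOfRule f ⁻¹' A) = μ A) ↔
    ¬ ∃ x : ℤ → Fin (n + 1), ∀ N i, ((caOfRule f)^[N] x) i ≠ 0 := by
  have h0 : f (0, 0, 0) = 0 := hb _ _ _ (Or.inl rfl)
  constructor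
  · rintro ⟨μ, hμ, hu⟩ ⟨x, hx⟩
    obtain ⟨ν, hν, h1⟩ := exists_inv f x hx
    have e1 := hu ν hν
    have e2 := hu _ (inv_dirac f h0)
    rw [e1, ← e2] at h1
    have hm : MeasurableSet {x : ℤ → Fin (n+1) | x 0 ≠ 0} :=
      (measurable_pi_apply 0) (MeasurableSet.of_discrete (s := {y | y ≠ 0}))
    rw [Measure.dirac_apply' _ hm] at h1
    simp at h1
  · intro h
    push Not at h
    refine ⟨_, inv_dirac f h0, fun μ hμ => inv_eq_dirac f ?_ hμ⟩
    intro x i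
    obtain ⟨T, j, hj⟩ := h x
    have spread : ∀ s : ℕ, ∀ k : ℤ, |k - j| ≤ s → ((caOfRule f)^[T + s] x) k = 0 := by
      intro s
      induction s with
      | zero =>
        intro k hk
        have : k = j := by
          have : k - j = 0 := by simpa using hk
          linarith
        rw [this]; exact hj
      | succ s ih =>
        intro k hk
        rw [← add_assoc, Function.iterate_succ_apply']
        apply hb
        push_cast at hk
        rw [abs_le] at hk
        rcases lt_trichotomy k j with h | h | h
        · right; right; apply ih; rw [abs_le]; constructor <;> linarith
        · right; left; apply ih; rw [h]; simp
        · left; apply ih; rw [abs_le]; constructor <;> linarith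
    refine ⟨T + (i - j).natAbs, fun N hN => ?_⟩
    have : N = T + (N - T) := by omega
    rw [this]
    apply spread
    rw [Int.abs_eq_natAbs]
    omega

end Ergodic
end CAUE

namespace CAUE

section Horn
open Function

/-- Counter actions. -/
inductive Act
  | stay
  | up (i : ℕ)
  | down (i : ℕ)
  | zero (i : ℕ)

/-- The transition relation of an action. -/
def Act.app : Act → (ℕ → ℕ) → (ℕ → ℕ) → Prop
  | .stay, v, w => w = v
  | .up i, v, w => w = update v i (v i + 1)
  | .down i, v, w => v = update w i (w i + 1)
  | .zero i, v, w => v i = 0 ∧ w = v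

/-- The action only mentions coordinates below `k`. -/
def Act.bdd (k : ℕ) : Act → Prop
  | .stay => True
  | .up i => i < k
  | .down i => i < k
  | .zero i => i < k

lemma Act.bdd_mono {k l : ℕ} (h : k ≤ l) {a : Act} (ha : a.bdd k) : a.bdd l := by
  cases a <;> simp only [Act.bdd] at * <;> omega

lemma Act.exists_bdd (a : Act) : ∃ k, a.bdd k := by
  cases a with
  | stay => exact ⟨0, trivial⟩
  | up i => exact ⟨i + 1, Nat.lt_succ_self i⟩
  | down i => exact ⟨i + 1, Nat.lt_succ_self i⟩
  | zero i => exact ⟨i + 1, Nat.lt_succ_self i⟩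

/-- A Horn clause. -/
structure Clause (Q : Type) where
  body : Set Q
  act : Act
  head : Q

/-- Derivability in a Horn system. -/
inductive Der {Q : Type} (C : Set (Clause Q)) : Q → (ℕ → ℕ) → Prop
  | mk (c : Clause Q) (hc : c ∈ C) (v w : ℕ → ℕ) (h : ∀ b ∈ c.body, Der C b v)
      (ha : c.act.app v w) : Der C c.head w

/-- Predicates definable by a finite Horn system. -/
def HornDef (R : (ℕ → ℕ) → Prop) : Prop :=
  ∃ (Q : Type) (_ : Finite Q) (C : Set (Clause Q)) (k : ℕ) (P : Q),
    (∀ c ∈ C, c.act.bdd k) ∧ ∀ v, Der C P v ↔ R v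

lemma HornDef.congr {R R' : (ℕ → ℕ) → Prop} (h : HornDef R) (e : ∀ v, R v ↔ R' v) :
    HornDef R' := by
  have : R = R' := funext fun v => propext (e v)
  exact this ▸ h

lemma HornDef.univ : HornDef (fun _ => True) := by
  refine ⟨Unit, inferInstance, {⟨∅, .stay, ()⟩}, 0, (), ?_, ?_⟩
  · rintro c rfl; trivial
  · intro v
    simp only [iff_true]
    exact Der.mk (C := {⟨∅, .stay, ()⟩}) ⟨∅, .stay, ()⟩ rfl v v (by simp) rfl

lemma HornDef.zero (i : ℕ) : HornDef (fun v => v i = 0) := by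
  refine ⟨Unit, inferInstance, {⟨∅, .zero i, ()⟩}, i + 1, (), ?_, ?_⟩
  · rintro c rfl; exact Nat.lt_succ_self i
  · intro v
    constructor
    · rintro ⟨c, hc, u, _, h, ha⟩
      rw [Set.mem_singleton_iff] at hc
      subst hc
      obtain ⟨h0, rfl⟩ := ha
      exact h0
    · intro h
      exact Der.mk (C := {⟨∅, .zero i, ()⟩}) ⟨∅, .zero i, ()⟩ rfl v v (by simp) ⟨h, rfl⟩

/-- Guarded reachability. -/
inductive Reach {N : Type} (q0 : N) (B : (ℕ → ℕ) → Prop)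
    (E : List (N × ((ℕ → ℕ) → Prop) × Act × N)) : N → (ℕ → ℕ) → Prop
  | start (v : ℕ → ℕ) (h : B v) : Reach q0 B E q0 v
  | step (q : N) (G : (ℕ → ℕ) → Prop) (a : Act) (q' : N) (he : (q, G, a, q') ∈ E)
      (v w : ℕ → ℕ) (h : Reach q0 B E q v) (hG : G v) (ha : a.app v w) : Reach q0 B E q' w

theorem HornDef.reach {N : Type} [Finite N] (q0 : N) (B : (ℕ → ℕ) → Prop) (hB : HornDef B)
    (E : List (N × ((ℕ → ℕ) → Prop) × Act × N)) (hE : ∀ e ∈ E, HornDef e.2.1) (q : N) :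
    HornDef (Reach q0 B E q) := by
  classical
  obtain ⟨Q0, fQ0, C0, k0, P0, hk0, hD0⟩ := hB
  choose Q fQ C k P hk hD using hE
  let J := {e // e ∈ E}
  have : Finite J := List.finite_toSet E
  have (j : J) : Finite (Q j.1 j.2) := fQ j.1 j.2
  let Q' := N ⊕ Q0 ⊕ (Σ j : J, Q j.1 j.2)
  let i0 : Q0 → Q' := fun x => Sum.inr (Sum.inl x)
  let ij : (j : J) → Q j.1 j.2 → Q' := fun j x => Sum.inr (Sum.inr ⟨j, x⟩)
  let C' : Set (Clause Q') :=
    {c | (∃ d ∈ C0, c = ⟨i0 '' d.body, d.act, i0 d.head⟩) ∨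
      (∃ j : J, ∃ d ∈ C j.1 j.2, c = ⟨ij j '' d.body, d.act, ij j d.head⟩) ∨
      (c = ⟨{i0 P0}, .stay, Sum.inl q0⟩) ∨
      (∃ j : J, c = ⟨{Sum.inl j.1.1, ij j (P j.1 j.2)}, j.1.2.2.1, Sum.inl j.1.2.2.2⟩)}
  have d0 : ∀ x v, Der C0 x v → Der C' (i0 x) v := by
    intro x v h
    induction h with
    | mk c hc v w h ha ih =>
      refine Der.mk (C := C') ⟨i0 '' c.body, c.act, i0 c.head⟩ (Or.inl ⟨c, hc, rfl⟩) v w ?_ ha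
      rintro _ ⟨b, hb, rfl⟩
      exact ih b hb
  have dj : ∀ j x v, Der (C j.1 j.2) x v → Der C' (ij j x) v := by
    intro j x v h
    induction h with
    | mk c hc v w h ha ih =>
      refine Der.mk (C := C') ⟨ij j '' c.body, c.act, ij j c.head⟩
        (Or.inr (Or.inl ⟨j, c, hc, rfl⟩)) v w ?_ ha
      rintro _ ⟨b, hb, rfl⟩
      exact ih b hb
  have back : ∀ x v, Der C' x v → (match x with
      | Sum.inl n => Reach q0 B E n v
      | Sum.inr (Sum.inl x) => Der C0 x v
      | Sum.inr (Sum.inr ⟨j, x⟩) => Der (C j.1 j.2) x v) := by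
    intro x v h
    induction h with
    | mk c hc v w h ha ih =>
      rcases hc with ⟨d, hd, rfl⟩ | ⟨j, d, hd, rfl⟩ | rfl | ⟨j, rfl⟩
      · exact Der.mk d hd v w (fun b hb => ih (i0 b) ⟨b, hb, rfl⟩) ha
      · exact Der.mk d hd v w (fun b hb => ih (ij j b) ⟨b, hb, rfl⟩) ha
      · have := ih (i0 P0) rfl
        have e : w = v := ha
        subst e
        exact Reach.start _ ((hD0 _).1 this)
      · have h1 := ih (Sum.inl j.1.1) (Or.inl rfl)
        have h2 := ih (ij j (P j.1 j.2)) (Or.inr rfl)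
        exact Reach.step j.1.1 j.1.2.1 j.1.2.2.1 j.1.2.2.2 j.2 v w h1 ((hD j.1 j.2 _).1 h2) ha
  have forw : ∀ n v, Reach q0 B E n v → Der C' (Sum.inl n) v := by
    intro n v h
    induction h with
    | start v h =>
      refine Der.mk (C := C') ⟨{i0 P0}, .stay, Sum.inl q0⟩ (Or.inr (Or.inr (Or.inl rfl))) v v ?_ rfl
      rintro _ rfl
      exact d0 _ _ ((hD0 _).2 h)
    | step q G a q' he v w h hG ha ih =>
      let j : J := ⟨(q, G, a, q'), he⟩
      refine Der.mk (C := C') ⟨{Sum.inl j.1.1, ij j (P j.1 j.2)}, j.1.2.2.1, Sum.inl j.1.2.2.2⟩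
        (Or.inr (Or.inr (Or.inr ⟨j, rfl⟩))) v w ?_ ha
      rintro _ (rfl | rfl)
      · exact ih
      · exact dj _ _ _ ((hD j.1 j.2 _).2 hG)
  -- bounds
  obtain ⟨K1, hK1⟩ : ∃ K, ∀ j : J, k j.1 j.2 ≤ K := by
    obtain ⟨K, hK⟩ := (Set.finite_range (fun j : J => k j.1 j.2)).bddAbove
    exact ⟨K, fun j => hK ⟨j, rfl⟩⟩
  obtain ⟨K2, hK2⟩ : ∃ K, ∀ j : J, (j.1.2.2.1).bdd K := by
    choose m hm using Act.exists_bdd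
    obtain ⟨K, hK⟩ := (Set.finite_range (fun j : J => m j.1.2.2.1)).bddAbove
    exact ⟨K, fun j => Act.bdd_mono (hK ⟨j, rfl⟩) (hm _)⟩
  refine ⟨Q', inferInstance, C', max k0 (max K1 K2), Sum.inl q, ?_, ?_⟩
  · rintro c (⟨d, hd, rfl⟩ | ⟨j, d, hd, rfl⟩ | rfl | ⟨j, rfl⟩)
    · exact Act.bdd_mono (le_max_left _ _) (hk0 d hd)
    · exact Act.bdd_mono (le_trans (hK1 j) (le_trans (le_max_left _ _) (le_max_right _ _)))
        (hk j.1 j.2 d hd)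
    · trivial
    · exact Act.bdd_mono (le_trans (le_max_right _ _) (le_max_right _ _)) (hK2 j)
  · intro v
    exact ⟨fun h => back _ _ h, fun h => forw _ _ h⟩

lemma HornDef.and {A B : (ℕ → ℕ) → Prop} (hA : HornDef A) (hB : HornDef B) :
    HornDef (fun v => A v ∧ B v) := by
  refine (HornDef.reach (false) A hA [(false, B, .stay, true)] (by simpa using hB) true).congr ?_
  intro v
  constructor
  · intro h
    have : ∀ q v, Reach false A [(false, B, .stay, true)] q v → if q then A v ∧ B v else A v := by
      intro q v h
      induction h with
      | start v h => simpa using h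
      | step q G a q' he v w h hG ha ih =>
        simp only [List.mem_singleton, Prod.mk.injEq] at he
        obtain ⟨rfl, rfl, rfl, rfl⟩ := he
        have e : w = v := ha
        subst e
        exact ⟨ih, hG⟩
    simpa using this _ _ h
  · rintro ⟨ha, hb⟩
    exact Reach.step false B .stay true (by simp) v v (Reach.start v ha) hb rfl

lemma Reach.move {N : Type} {q0 : N} {B : (ℕ → ℕ) → Prop}
    {E : List (N × ((ℕ → ℕ) → Prop) × Act × N)} {q : N} {i : ℕ}
    (h1 : (q, (fun _ => True), Act.up i, q) ∈ E) (h2 : (q, (fun _ => True), Act.down i, q) ∈ E)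
    {v : ℕ → ℕ} (h : Reach q0 B E q v) (b : ℕ) : Reach q0 B E q (update v i b) := by
  have hz : Reach q0 B E q (update v i 0) := by
    have : ∀ m (v : ℕ → ℕ), v i = m → Reach q0 B E q v → Reach q0 B E q (update v i 0) := by
      intro m
      induction m with
      | zero =>
        intro v hv h
        rw [← hv, update_eq_self]; exact h
      | succ m ih =>
        intro v hv h
        have := ih (update v i m) (by simp)
          (Reach.step _ _ _ _ h2 v (update v i m) h trivial (by simp [Act.app, ← hv]))
        simpa using this
    exact this _ v rfl h
  induction b with
  | zero => exact hz
  | succ b ih =>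
    exact Reach.step _ _ _ _ h1 _ _ ih trivial (by simp [Act.app])

lemma HornDef.ex {A : (ℕ → ℕ) → Prop} (hA : HornDef A) (i : ℕ) :
    HornDef (fun v => ∃ a, A (update v i a)) := by
  refine (HornDef.reach () A hA
    [((), (fun _ => True), .up i, ()), ((), (fun _ => True), .down i, ())]
    (by simpa using HornDef.univ) ()).congr ?_
  intro v
  constructor
  · intro h
    generalize hq : () = q at h
    induction h with
    | start v h => exact ⟨v i, by simpa using h⟩
    | step q G a q' he v w h hG ha ih =>
      obtain ⟨b, hb⟩ := ih rfl
      refine ⟨b, ?_⟩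
      simp only [List.mem_cons, Prod.mk.injEq, List.not_mem_nil, or_false] at he
      rcases he with ⟨-, -, rfl, -⟩ | ⟨-, -, rfl, -⟩
      · simp only [Act.app] at ha
        rw [ha]; simpa using hb
      · simp only [Act.app] at ha
        rw [ha] at hb; simpa using hb
  · rintro ⟨a, ha⟩
    have := Reach.move (q := ()) (i := i) (E := [((), (fun _ => True), .up i, ()),
      ((), (fun _ => True), .down i, ())]) (by simp) (by simp)
      (Reach.start (q0 := ()) (B := A) _ ha) (v i)
    simpa using this

lemma HornDef.eq (i j : ℕ) : HornDef (fun v => v i = v j) := by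
  by_cases hij : i = j
  · subst hij; exact HornDef.univ.congr (by simp)
  refine (HornDef.reach false _ ((HornDef.zero i).and (HornDef.zero j))
    [(false, (fun _ => True), .up i, true), (true, (fun _ => True), .up j, false)]
    (by simpa using HornDef.univ) false).congr ?_
  intro v
  constructor
  · intro h
    have : ∀ q v, Reach false (fun v => v i = 0 ∧ v j = 0) [(false, (fun _ => True), .up i, true),
        (true, (fun _ => True), .up j, false)] q v → if q then v i = v j + 1 else v i = v j := by
      intro q v h
      induction h with
      | start v h => simp [h.1, h.2]
      | step q G a q' he v w h hG ha ih =>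
        simp only [List.mem_cons, Prod.mk.injEq, List.not_mem_nil, or_false] at he
        rcases he with ⟨rfl, -, rfl, rfl⟩ | ⟨rfl, -, rfl, rfl⟩
        · simp only [Act.app] at ha
          subst ha
          simp [update_of_ne (Ne.symm hij)] at ih ⊢
          exact ih
        · simp only [Act.app] at ha
          subst ha
          simp [update_of_ne hij] at ih ⊢
          exact ih
    simpa using this _ _ h
  · have : ∀ m (v : ℕ → ℕ), v i = m → v j = m → Reach false (fun v => v i = 0 ∧ v j = 0)
        [(false, (fun _ => True), .up i, true),
        (true, (fun _ => True), .up j, false)] false v := by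
      intro m
      induction m with
      | zero => intro v h1 h2; exact Reach.start v ⟨h1, h2⟩
      | succ m ih =>
        intro v h1 h2
        have r0 := ih (update (update v i m) j m) (by simp [update_of_ne hij]) (by simp)
        have r1 := Reach.step false (fun _ => True) (.up i) true (by simp) _ (update v j m) r0 trivial (by
            funext x; simp only [update_apply]; split_ifs <;> simp_all)
        refine Reach.step true (fun _ => True) (.up j) false (by simp) _ v r1 trivial (by
            funext x; simp only [update_apply]; split_ifs <;> simp_all)
    intro h
    exact this _ v rfl h.symm

/-- Introduce a fresh copy `m` of coordinate `i`. -/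
lemma HornDef.copy {A : (ℕ → ℕ) → Prop} (hA : HornDef A) {i m : ℕ} (him : i ≠ m) :
    HornDef (fun v => A (update v m (v i))) := by
  refine ((hA.and (HornDef.eq i m)).ex m).congr ?_
  intro v
  simp only [update_self, update_of_ne him]
  constructor
  · rintro ⟨a, h, rfl⟩; exact h
  · intro h; exact ⟨_, h, rfl⟩

lemma HornDef.all {A : ℕ → (ℕ → ℕ) → Prop} (m : ℕ) (hA : ∀ i < m, HornDef (A i)) :
    HornDef (fun v => ∀ i < m, A i v) := by
  induction m with
  | zero => exact HornDef.univ.congr (by simp)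
  | succ m ih =>
    refine ((ih fun i hi => hA i (by omega)).and (hA m (by omega))).congr ?_
    intro v
    constructor
    · rintro ⟨h1, h2⟩ i hi
      rcases Nat.lt_succ_iff_lt_or_eq.1 hi with h | rfl
      · exact h1 i h
      · exact h2
    · intro h
      exact ⟨fun i hi => h i (by omega), h m (by omega)⟩

lemma HornDef.exMany {A : (ℕ → ℕ) → Prop} (hA : HornDef A) (M m : ℕ) :
    HornDef (fun v => ∃ u : ℕ → ℕ, (∀ j, j < M ∨ M + m ≤ j → u j = v j) ∧ A u) := by
  induction m with
  | zero =>
    refine hA.congr fun v => ⟨fun h => ⟨v, fun _ _ => rfl, h⟩, ?_⟩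
    rintro ⟨u, hu, h⟩
    have : u = v := funext fun j => hu j (by omega)
    exact this ▸ h
  | succ m ih =>
    refine (ih.ex (M + m)).congr fun v => ⟨?_, ?_⟩
    · rintro ⟨a, u, hu, h⟩
      refine ⟨u, fun j hj => ?_, h⟩
      rw [hu j (by omega), update_of_ne (by omega)]
    · rintro ⟨u, hu, h⟩
      refine ⟨u (M + m), u, fun j hj => ?_, h⟩
      by_cases e : j = M + m
      · subst e; simp
      · rw [update_of_ne e, hu j (by omega)]

end Horn
end CAUE

namespace CAUE

section HornPrim
open Function

lemma HornDef.fresh_out {F : (ℕ → ℕ) → ℕ} {m out : ℕ} (h : HornDef (fun v => v m = F v))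
    (hF : ∀ v a, F (update v m a) = F v) (hne : out ≠ m) : HornDef (fun v => v out = F v) := by
  refine ((h.and (HornDef.eq out m)).ex m).congr fun v => ?_
  simp only [update_self, update_of_ne hne, hF]
  exact ⟨fun ⟨a, h1, h2⟩ => h2.trans h1, fun h => ⟨_, rfl, h⟩⟩

lemma exists_fresh {n : ℕ} (inp : Fin n → ℕ) (out : ℕ) : ∃ M, out < M ∧ ∀ i, inp i < M := by
  obtain ⟨K, hK⟩ := (Set.finite_range inp).bddAbove
  exact ⟨max out K + 1, by omega, fun i => by have := hK ⟨i, rfl⟩; omega⟩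

lemma HornDef.succ_fresh (i m : ℕ) (h : i ≠ m) : HornDef (fun v => v m = v i + 1) := by
  refine (HornDef.reach false _ (HornDef.eq m i)
    [(false, (fun _ => True), .up m, true)] (by simpa using HornDef.univ) true).congr ?_
  intro v
  constructor
  · intro h
    have : ∀ q v, Reach false (fun v => v m = v i) [(false, (fun _ => True), .up m, true)] q v →
        if q then v m = v i + 1 else v m = v i := by
      intro q v h
      induction h with
      | start v h => simpa using h
      | step q G a q' he v w h hG ha ih =>
        simp only [List.mem_singleton, Prod.mk.injEq] at he
        obtain ⟨rfl, -, rfl, rfl⟩ := he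
        simp only [Act.app] at ha
        subst ha
        simpa [update_of_ne (by assumption : i ≠ m)] using ih
    simpa using this _ _ h
  · intro hv
    have r0 := Reach.start (q0 := false) (B := fun v => v m = v i)
      (E := [(false, (fun _ => True), .up m, true)]) (update v m (v i)) (by simp [update_of_ne h])
    exact Reach.step false (fun _ => True) (.up m) true (by simp) _ v r0 trivial (by
      simp [Act.app, ← hv])

theorem HornDef.primrec {n : ℕ} {f : List.Vector ℕ n → ℕ} (hf : Nat.Primrec' f) :
    ∀ (inp : Fin n → ℕ) (out : ℕ),
      HornDef (fun v => v out = f (List.Vector.ofFn fun i => v (inp i))) := by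
  induction hf with
  | zero => intro inp out; exact HornDef.zero out
  | succ =>
    intro inp out
    obtain ⟨M, hM, hi⟩ := exists_fresh inp out
    have := HornDef.succ_fresh (inp 0) M (hi 0).ne
    refine (this.fresh_out (out := out) (fun v a => ?_) hM.ne).congr fun v => ?_
    · rw [update_of_ne (hi 0).ne]
    · rfl
  | get i =>
    intro inp out
    simpa using HornDef.eq out (inp i)
  | @comp m n f g hf hg ihf ihg =>
    intro inp out
    obtain ⟨M, hM, hi⟩ := exists_fresh inp out
    have h1 : HornDef (fun v => ∀ j, j < n → ∀ hj : j < n,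
        v (M + j) = g ⟨j, hj⟩ (List.Vector.ofFn fun i => v (inp i))) := by
      refine HornDef.all n fun j hj => (ihg ⟨j, hj⟩ inp (M + j)).congr fun v => ?_
      exact ⟨fun h _ => h, fun h => h hj⟩
    have h2 := ihf (fun i => M + i) out
    refine ((h1.and h2).exMany M n).congr fun v => ?_
    constructor
    · rintro ⟨u, hu, hg, hf⟩
      rw [hu out (by omega)] at hf
      rw [hf]
      congr 2
      funext i
      rw [hg i i.2 i.2]
      congr 2
      funext k
      exact hu _ (Or.inl (hi k))
    · intro h
      let u : ℕ → ℕ := fun j => if hj : M ≤ j ∧ j - M < n then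
        g ⟨j - M, hj.2⟩ (List.Vector.ofFn fun i => v (inp i)) else v j
      have e0 : (fun i => u (inp i)) = fun i => v (inp i) := by
        funext i
        have := hi i
        simp only [u]
        rw [dif_neg (by omega)]
      have e1 : ∀ i : Fin n, u (M + i) = g i (List.Vector.ofFn fun i => v (inp i)) := by
        intro i
        simp only [u]
        rw [dif_pos ⟨by omega, by have := i.2; omega⟩]
        congr 1
        simp
      refine ⟨u, fun j hj => ?_, ?_, ?_⟩
      · simp only [u]
        rw [dif_neg (by omega)]
      · intro j hj _
        rw [e0]; exact e1 ⟨j, hj⟩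
      · have : u out = v out := by
          simp only [u]
          rw [dif_neg (by omega)]
        rw [this, h]
        simp only [e1]
  | @prec n f g hf hg ihf ihg =>
    intro inp out
    obtain ⟨M, hM, hi⟩ := exists_fresh inp out
    let xs : Fin n → ℕ := fun i => inp i.succ
    obtain ⟨X, hXd⟩ : ∃ X : (ℕ → ℕ) → List.Vector ℕ n,
      X = fun v => List.Vector.ofFn fun i => v (xs i) := ⟨_, rfl⟩
    obtain ⟨h, hhd⟩ : ∃ h : ℕ → (ℕ → ℕ) → ℕ, h = fun m v =>
      Nat.rec (f (X v)) (fun y IH => g (y ::ᵥ IH ::ᵥ X v)) m := ⟨_, rfl⟩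
    have hX : ∀ v j a, M ≤ j → X (update v j a) = X v := by
      intro v j a hj
      simp only [hXd]
      congr 1
      funext i
      rw [update_of_ne]
      have := hi i.succ
      simp only [xs]; omega
    have hh : ∀ m v j a, M ≤ j → h m (update v j a) = h m v := by
      intro m v j a hj
      simp only [hhd, hX v j a hj]
    have hs : ∀ m v, h (m + 1) v = g (m ::ᵥ h m v ::ᵥ X v) := fun m v => by subst hhd; rfl
    have h0' : ∀ v, h 0 v = f (X v) := fun v => by subst hhd; rfl
    obtain ⟨t, ht⟩ : ∃ t, t = M := ⟨_, rfl⟩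
    obtain ⟨y, hy⟩ : ∃ y, y = M + 1 := ⟨_, rfl⟩
    obtain ⟨z, hz⟩ : ∃ z, z = M + 2 := ⟨_, rfl⟩
    have tM : M ≤ t := by omega
    have yM : M ≤ y := by omega
    have zM : M ≤ z := by omega
    have ty : t ≠ y := by omega
    have tz : t ≠ z := by omega
    have yz : y ≠ z := by omega
    have main : HornDef (fun v => v y = h (v t) v) := by
      have hB : HornDef (fun v => v t = 0 ∧ v y = f (X v)) := by
        rw [hXd]; exact (HornDef.zero t).and (ihf xs y)
      have hS : HornDef (fun v => v z = g (v t ::ᵥ v y ::ᵥ X v)) :=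
by
        rw [hXd]; exact ihg (Fin.cons t (Fin.cons y xs)) z
      let E : List (Fin 3 × ((ℕ → ℕ) → Prop) × Act × Fin 3) :=
        [(0, (fun v => v z = g (v t ::ᵥ v y ::ᵥ X v)), .stay, 1),
         (1, (fun _ => True), .up y, 1), (1, (fun _ => True), .down y, 1),
         (1, (fun v => v y = v z), .stay, 2),
         (2, (fun _ => True), .up z, 2), (2, (fun _ => True), .down z, 2),
         (2, (fun _ => True), .up t, 0)]
      have hE : ∀ e ∈ E, HornDef e.2.1 := by
        simp only [E, List.forall_mem_cons]
        refine ⟨hS, HornDef.univ, HornDef.univ, HornDef.eq y z, HornDef.univ, HornDef.univ,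
          HornDef.univ, by simp⟩
      refine (HornDef.reach (0 : Fin 3) _ hB E hE 0).congr fun v => ⟨fun hv => ?_, ?_⟩
      · have : ∀ q v, Reach (0 : Fin 3) (fun v => v t = 0 ∧ v y = f (X v)) E q v →
            (q = 0 → v y = h (v t) v) ∧ (q = 1 → v z = h (v t + 1) v) ∧
            (q = 2 → v y = h (v t + 1) v) := by
          intro q v hr
          induction hr with
          | start v h0 =>
            refine ⟨fun _ => ?_, fun h => by simp at h, fun h => by simp at h⟩
            rw [h0.1, h0.2, h0']
          | step q G a q' he v w hr hG ha ih =>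
            simp only [E, List.mem_cons, Prod.mk.injEq, List.not_mem_nil, or_false] at he
            rcases he with ⟨rfl, rfl, rfl, rfl⟩ | ⟨rfl, rfl, rfl, rfl⟩ | ⟨rfl, rfl, rfl, rfl⟩ |
              ⟨rfl, rfl, rfl, rfl⟩ | ⟨rfl, rfl, rfl, rfl⟩ | ⟨rfl, rfl, rfl, rfl⟩ |
              ⟨rfl, rfl, rfl, rfl⟩ <;> simp only [Act.app] at ha
            · subst ha
              have := ih.1 rfl
              refine ⟨fun h => by simp at h, fun _ => ?_, fun h => by simp at h⟩
              rw [hG, hs, this]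
            · subst ha
              have := ih.2.1 rfl
              refine ⟨fun h => by simp at h, fun _ => ?_, fun h => by simp at h⟩
              rw [update_of_ne yz.symm, update_of_ne ty, hh _ _ _ _ yM, this]
            · subst ha
              have := ih.2.1 rfl
              refine ⟨fun h => by simp at h, fun _ => ?_, fun h => by simp at h⟩
              rw [update_of_ne yz.symm, update_of_ne ty, hh _ _ _ _ yM] at this
              exact this
            · subst ha
              have := ih.2.1 rfl
              refine ⟨fun h => by simp at h, fun h => by simp at h, fun _ => ?_⟩
              rw [hG, this]
            · subst ha
              have := ih.2.2 rfl
              refine ⟨fun h => by simp at h, fun h => by simp at h, fun _ => ?_⟩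
              rw [update_of_ne yz, update_of_ne tz, hh _ _ _ _ zM, this]
            · subst ha
              have := ih.2.2 rfl
              refine ⟨fun h => by simp at h, fun h => by simp at h, fun _ => ?_⟩
              rw [update_of_ne yz, update_of_ne tz, hh _ _ _ _ zM] at this
              exact this
            · subst ha
              have := ih.2.2 rfl
              refine ⟨fun _ => ?_, fun h => by simp at h, fun h => by simp at h⟩
              rw [update_of_ne ty.symm, update_self, hh _ _ _ _ tM, this]
        exact (this _ _ hv).1 rfl
      · have : ∀ m (v : ℕ → ℕ), v t = m → v y = h m v →
            Reach (0 : Fin 3) (fun v => v t = 0 ∧ v y = f (X v)) E 0 v := by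
          intro m
          induction m with
          | zero => intro v h1 h2; exact Reach.start v ⟨h1, by rw [h2, h0']⟩
          | succ m ih =>
            intro v h1 h2
            obtain ⟨u0, hu0⟩ : ∃ u, u = update (update (update v t m) y (h m v)) z (h (m+1) v) :=
              ⟨_, rfl⟩
            have ut : u0 t = m := by
              rw [hu0, update_of_ne tz, update_of_ne ty, update_self]
            have uy : u0 y = h m v := by
              rw [hu0, update_of_ne yz, update_self]
            have uz : u0 z = h (m+1) v := by
              rw [hu0, update_self]
            have uX : X u0 = X v := by
              rw [hu0, hX _ _ _ zM, hX _ _ _ yM, hX _ _ _ tM]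
            have uh : ∀ k, h k u0 = h k v := by
              intro k
              rw [hu0, hh _ _ _ _ zM, hh _ _ _ _ yM, hh _ _ _ _ tM]
            have r0 := ih u0 ut (by rw [uy, uh])
            have r1 := Reach.step 0 (fun v => v z = g (v t ::ᵥ v y ::ᵥ X v)) .stay 1 (by simp [E])
              u0 u0 r0 (by rw [uz, ut, uy, uX, hs]) rfl
            have r2 := Reach.move (q := (1 : Fin 3)) (i := y) (by simp [E]) (by simp [E])
              r1 (h (m+1) v)
            have r3 := Reach.step 1 (fun v => v y = v z) .stay 2 (by simp [E]) _ _ r2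
              (by rw [update_self, update_of_ne yz.symm, uz]) rfl
            have r4 := Reach.move (q := (2 : Fin 3)) (i := z) (by simp [E]) (by simp [E])
              r3 (v z)
            refine Reach.step 2 (fun _ => True) (.up t) 0 (by simp [E]) _ v r4 trivial ?_
            simp only [Act.app]
            funext x
            by_cases xt : x = t
            · subst xt
              rw [update_self, update_of_ne tz, update_of_ne ty, ut, h1]
            rw [update_of_ne xt]
            by_cases xz : x = z
            · subst xz; rw [update_self]
            rw [update_of_ne xz]
            by_cases xy : x = y
            · subst xy; rw [update_self, h2]
            rw [update_of_ne xy, hu0, update_of_ne xz, update_of_ne xy, update_of_ne xt]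
        intro hv
        exact this _ v rfl hv
    have h2 := main.copy (i := inp 0) (m := t) (by have := hi 0; omega)
    have h3 : HornDef (fun v => v y = h (v (inp 0)) v) := by
      refine h2.congr fun v => ?_
      rw [update_of_ne ty.symm, update_self, hh _ _ _ _ tM]
    have h4 := h3.fresh_out (out := out) (fun v a => by
      rw [hh _ _ _ _ yM, update_of_ne (by have := hi 0; omega)]) (by omega)
    exact h4.congr fun v => by rw [hhd, hXd]; rfl

/-- The halting problem as a Horn system. -/
theorem halting_horn : ∃ (Q : Type) (_ : Finite Q) (C : Set (Clause Q)) (k : ℕ) (P : Q),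
    (∀ c ∈ C, c.act.bdd k) ∧ 0 < k ∧ ∀ c : Nat.Partrec.Code,
      (c.eval 0).Dom ↔ ∃ v : ℕ → ℕ, v 0 = Encodable.encode c ∧ Der C P v := by
  let g : List.Vector ℕ 2 → ℕ := fun v =>
    if (Nat.Partrec.Code.evaln v.tail.head (Denumerable.ofNat Nat.Partrec.Code v.head) 0).isSome
    then 0 else 1
  have hg : Primrec g := by
    have h1 : Primrec (fun v : List.Vector ℕ 2 => v.head) := Primrec.vector_head
    have h2 : Primrec (fun v : List.Vector ℕ 2 => v.tail.head) :=
      Primrec.vector_head.comp Primrec.vector_tail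
    have h3 : Primrec (fun v : List.Vector ℕ 2 => Nat.Partrec.Code.evaln v.tail.head
        (Denumerable.ofNat Nat.Partrec.Code v.head) 0) :=
      Nat.Partrec.Code.primrec_evaln.comp
        ((h2.pair ((Primrec.ofNat _).comp h1)).pair (Primrec.const 0))
    have h4 := Primrec.option_isSome.comp h3
    exact Primrec.ite (Primrec.eq.comp h4 (Primrec.const true)) (Primrec.const 0) (Primrec.const 1)
  have hd := (HornDef.primrec (Nat.Primrec'.of_prim hg) (fun i => i) 2).and (HornDef.zero 2)
  obtain ⟨Q, fQ, C, k, P, hk, hD⟩ := hd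
  refine ⟨Q, fQ, C, k + 1, P, fun c hc => Act.bdd_mono (Nat.le_succ k) (hk c hc), by omega, ?_⟩
  intro c
  have key : (c.eval 0).Dom ↔ ∃ s, (Nat.Partrec.Code.evaln s c 0).isSome := by
    rw [Part.dom_iff_mem]
    constructor
    · rintro ⟨y, hy⟩
      obtain ⟨s, hs⟩ := Nat.Partrec.Code.evaln_complete.1 hy
      exact ⟨s, Option.isSome_iff_exists.2 ⟨y, hs⟩⟩
    · rintro ⟨s, hs⟩
      obtain ⟨y, hy⟩ := Option.isSome_iff_exists.1 hs
      exact ⟨y, Nat.Partrec.Code.evaln_sound hy⟩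
  rw [key]
  constructor
  · rintro ⟨s, hs⟩
    refine ⟨fun i => if i = 0 then Encodable.encode c else if i = 1 then s else 0, by simp, ?_⟩
    rw [hD]
    simp [g, List.Vector.ofFn, hs]
  · rintro ⟨v, hv, hd⟩
    rw [hD] at hd
    refine ⟨v 1, ?_⟩
    obtain ⟨h1, h2⟩ := hd
    rw [h2] at h1
    by_contra hn
    simp [g, List.Vector.ofFn, hv, hn] at h1

end HornPrim
end CAUE

namespace CAUE

section Arith

/-- Reduction mod `p` of residues mod `p ^ 2`. -/
def redp (p : ℕ) : ZMod (p ^ 2) →+* ZMod p :=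
  ZMod.castHom (dvd_pow_self p two_ne_zero) (ZMod p)

lemma redp_eq_zero {p : ℕ} [hp : Fact p.Prime] (x : ZMod (p ^ 2)) :
    redp p x = 0 ↔ ∃ y, x = (p : ZMod (p ^ 2)) * y := by
  constructor
  · intro h
    have e : ((x.val : ℕ) : ZMod (p ^ 2)) = x := ZMod.natCast_zmod_val x
    rw [← e, map_natCast, ZMod.natCast_eq_zero_iff] at h
    obtain ⟨c, hc⟩ := h
    refine ⟨c, ?_⟩
    rw [← e, hc]; push_cast; rfl
  · rintro ⟨y, rfl⟩
    rw [map_mul, map_natCast]; simp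

lemma redp_pmul {p : ℕ} [hp : Fact p.Prime] (y : ZMod (p ^ 2)) :
    (p : ZMod (p ^ 2)) * y = 0 ↔ redp p y = 0 := by
  have e : ((y.val : ℕ) : ZMod (p ^ 2)) = y := ZMod.natCast_zmod_val y
  rw [← e, map_natCast, ZMod.natCast_eq_zero_iff, ← Nat.cast_mul, ZMod.natCast_eq_zero_iff]
  generalize y.val = m
  rw [pow_two]
  exact Nat.mul_dvd_mul_iff_left hp.1.pos

lemma redp_pmul_inj {p : ℕ} [hp : Fact p.Prime] {x y : ZMod (p ^ 2)}
    (h : (p : ZMod (p ^ 2)) * x = (p : ZMod (p ^ 2)) * y) : redp p x = redp p y := by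
  have : (p : ZMod (p ^ 2)) * (x - y) = 0 := by rw [mul_sub, h, sub_self]
  rw [redp_pmul, map_sub, sub_eq_zero] at this
  exact this

lemma pmul_congr {p : ℕ} [hp : Fact p.Prime] {x y : ZMod (p ^ 2)}
    (h : redp p x = redp p y) : (p : ZMod (p ^ 2)) * x = (p : ZMod (p ^ 2)) * y := by
  rw [← sub_eq_zero, ← mul_sub, redp_pmul, map_sub, h, sub_self]

lemma redp_p {p : ℕ} : redp p (p : ZMod (p ^ 2)) = 0 := by
  rw [map_natCast]; simp

lemma cast_ne {p : ℕ} {i : ℤ} (h : ¬ (p : ℤ) ∣ i) : (i : ZMod p) ≠ 0 := by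
  rwa [Ne, ZMod.intCast_zmod_eq_zero_iff_dvd]

/-- The local digit constraint. -/
def Rel (p : ℕ) (x z y : ZMod (p ^ 2)) : Prop :=
  z = x ∨ z = x + p * y ∨ z = y ∨ z = y + p * x ∨ z = x + y ∨ p * z = x + y ∨ x + y = 0

lemma Rel.symm {p : ℕ} {x z y : ZMod (p ^ 2)} (h : Rel p x z y) : Rel p y z x := by
  unfold Rel at *
  rw [add_comm y x]
  tauto

lemma Rel.middle {p : ℕ} [hp : Fact p.Prime] {κ z : ZMod (p ^ 2)} {i s : ℤ}
    (hκ : redp p κ ≠ 0) (hz : redp p z ≠ 0) (hs : (s : ZMod p) ≠ 0)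
    (h : Rel p (κ * i) z (κ * ((p * s - i : ℤ) : ZMod (p ^ 2)))) :
    redp p z = redp p κ * i ∨ redp p z = - (redp p κ * i) ∨ redp p z = redp p κ * s := by
  have e : κ * i + κ * ((p * s - i : ℤ) : ZMod (p ^ 2)) = p * (κ * s) := by push_cast; ring
  have e2 : redp p (κ * ((p * s - i : ℤ) : ZMod (p ^ 2))) = - (redp p κ * i) := by
    rw [map_mul, map_intCast]; push_cast; simp
  have e1 : redp p (κ * i) = redp p κ * i := by rw [map_mul, map_intCast]
  rcases h with h | h | h | h | h | h | h
  · left; rw [h, e1]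
  · left; rw [h, map_add, e1, map_mul, redp_p]; simp
  · right; left; rw [h, e2]
  · right; left; rw [h, map_add, e2, map_mul, redp_p]; simp
  · rw [e] at h; rw [h, map_mul, redp_p] at hz; simp at hz
  · rw [e] at h
    right; right
    rw [redp_pmul_inj h, map_mul, map_intCast]
  · rw [e, redp_pmul, map_mul, map_intCast] at h
    exact absurd h (mul_ne_zero hκ hs)

lemma Rel.side {p : ℕ} [hp : Fact p.Prime] {κ x : ZMod (p ^ 2)} {j s : ℤ}
    (hκ : redp p κ ≠ 0) (hx : redp p x ≠ 0) (hs : (s : ZMod p) ≠ 0)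
    (h : Rel p x (κ * ((p * s + j : ℤ) : ZMod (p ^ 2))) (κ * j)) :
    redp p x = redp p κ * j ∨ redp p x = - (redp p κ * j) ∨ redp p x = redp p κ * s := by
  have e : κ * ((p * s + j : ℤ) : ZMod (p ^ 2)) = p * (κ * s) + κ * j := by push_cast; ring
  have e2 : redp p (κ * ((p * s + j : ℤ) : ZMod (p ^ 2))) = (redp p κ * j) := by
    rw [map_mul, map_intCast]; push_cast; simp
  have e1 : redp p (κ * j) = redp p κ * j := by rw [map_mul, map_intCast]
  rcases h with h | h | h | h | h | h | h
  · left; rw [← h, e2]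
  · left; rw [← e2, h, map_add, map_mul, redp_p]; simp
  · rw [e, add_eq_right, redp_pmul, map_mul, map_intCast] at h
    exact absurd h (mul_ne_zero hκ hs)
  · rw [e, add_comm, add_left_cancel_iff] at h
    right; right
    rw [← redp_pmul_inj h, map_mul, map_intCast]
  · rw [e, add_left_inj] at h
    rw [← h, map_mul, redp_p] at hx; simp at hx
  · right; left
    have := congrArg (redp p) h
    rw [map_add, map_mul, redp_p, e1, zero_mul] at this
    exact eq_neg_of_add_eq_zero_left this.symm
  · right; left
    have := congrArg (redp p) h
    rw [map_add, map_zero, e1] at this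
    exact eq_neg_of_add_eq_zero_left this

lemma Rel.sum {p : ℕ} [hp : Fact p.Prime] {x z y : ZMod (p ^ 2)} (h : Rel p x z y)
    (hx : redp p x ≠ 0) (hy : redp p y ≠ 0) (hz : redp p z ≠ 0)
    (hs : redp p z = redp p x + redp p y) : z = x + y := by
  rcases h with h | h | h | h | h | h | h
  · rw [h, left_eq_add] at hs; exact absurd hs hy
  · rw [h, map_add, map_mul, redp_p, zero_mul, add_zero, left_eq_add] at hs; exact absurd hs hy
  · rw [h, right_eq_add] at hs; exact absurd hs hx
  · rw [h, map_add, map_mul, redp_p, zero_mul, add_zero, right_eq_add] at hs; exact absurd hs hx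
  · exact h
  · rw [← map_add, ← h, map_mul, redp_p, zero_mul] at hs; exact absurd hs hz
  · rw [← map_add, h, map_zero] at hs; exact absurd hs hz

lemma two_class {p : ℕ} [hp : Fact p.Prime] (h5 : 5 ≤ p) {κ ξ τ : ZMod p} (hκ : κ ≠ 0)
    (h1 : ξ = κ * ((1 : ℤ) : ZMod p) ∨ ξ = - (κ * ((1 : ℤ) : ZMod p)) ∨ ξ = τ)
    (h2 : ξ = κ * ((2 : ℤ) : ZMod p) ∨ ξ = - (κ * ((2 : ℤ) : ZMod p)) ∨ ξ = τ) : ξ = τ := by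
  have h3 : (3 : ZMod p) ≠ 0 := by
    intro h
    have : ((3 : ℕ) : ZMod p) = 0 := by exact_mod_cast h
    rw [ZMod.natCast_eq_zero_iff] at this
    have := Nat.le_of_dvd (by norm_num) this
    omega
  have a1 : κ * 3 ≠ 0 := mul_ne_zero hκ h3
  push_cast at h1 h2
  rcases h1 with h1 | h1 | h1
  · rcases h2 with h2 | h2 | h2
    · exact absurd (by linear_combination h1 - h2) hκ
    · exact absurd (by linear_combination h2 - h1) a1
    · exact h2
  · rcases h2 with h2 | h2 | h2
    · exact absurd (by linear_combination h1 - h2) a1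
    · exact absurd (by linear_combination h2 - h1) hκ
    · exact h2
  · exact h1

lemma avoid {p : ℕ} [hp : Fact p.Prime] (h5 : 5 ≤ p) (c1 c2 c3 c4 : ℤ) :
    ∃ z : ℤ, ∀ t : ℤ, (¬ (p : ℤ) ∣ z + p * t - c1) ∧ (¬ (p : ℤ) ∣ z + p * t - c2) ∧
      (¬ (p : ℤ) ∣ z + p * t - c3) ∧ (¬ (p : ℤ) ∣ z + p * t - c4) := by
  classical
  obtain ⟨z, hz⟩ : ∃ z : ZMod p, z ∉ ({(c1 : ZMod p), (c2 : ZMod p), (c3 : ZMod p), (c4 : ZMod p)} :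
      Finset (ZMod p)) := by
    by_contra h
    push Not at h
    have h1 : (Finset.univ : Finset (ZMod p)) ⊆ {(c1 : ZMod p), (c2 : ZMod p), (c3 : ZMod p), (c4 : ZMod p)} :=
      fun z _ => h z
    have h2 := (Finset.card_le_card h1).trans Finset.card_le_four
    rw [Finset.card_univ, ZMod.card] at h2
    omega
  obtain ⟨z, rfl⟩ := ZMod.intCast_surjective z
  simp only [Finset.mem_insert, Finset.mem_singleton, not_or] at hz
  have key : ∀ c t : ℤ, (z : ZMod p) ≠ c → ¬ (p : ℤ) ∣ z + p * t - c := by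
    intro c t h hd
    rw [← ZMod.intCast_zmod_eq_zero_iff_dvd] at hd
    push_cast at hd
    simp only [CharP.cast_eq_zero, zero_mul, add_zero] at hd
    exact h (sub_eq_zero.1 hd)
  exact ⟨z, fun t => ⟨key _ _ hz.1, key _ _ hz.2.1, key _ _ hz.2.2.1, key _ _ hz.2.2.2⟩⟩

lemma avoid_ge {p : ℕ} [hp : Fact p.Prime] (h5 : 5 ≤ p) (c1 c2 c3 c4 N : ℤ) :
    ∃ z : ℤ, N ≤ z ∧ (¬ (p : ℤ) ∣ z - c1) ∧ (¬ (p : ℤ) ∣ z - c2) ∧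
      (¬ (p : ℤ) ∣ z - c3) ∧ (¬ (p : ℤ) ∣ z - c4) := by
  obtain ⟨z, hz⟩ := avoid h5 c1 c2 c3 c4
  refine ⟨z + p * (|N| + |z|), ?_, hz _⟩
  have : (|N| + |z|) ≤ p * (|N| + |z|) := le_mul_of_one_le_left (by positivity) (by exact_mod_cast hp.1.one_le)
  have := neg_abs_le z
  have := le_abs_self N
  linarith

lemma avoid_le {p : ℕ} [hp : Fact p.Prime] (h5 : 5 ≤ p) (c1 c2 c3 c4 N : ℤ) :
    ∃ z : ℤ, z ≤ N ∧ (¬ (p : ℤ) ∣ z - c1) ∧ (¬ (p : ℤ) ∣ z - c2) ∧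
      (¬ (p : ℤ) ∣ z - c3) ∧ (¬ (p : ℤ) ∣ z - c4) := by
  obtain ⟨z, h, h1, h2, h3, h4⟩ := avoid_ge h5 (-c1) (-c2) (-c3) (-c4) (-N)
  have key : ∀ c, ¬ (p : ℤ) ∣ z - -c → ¬ (p : ℤ) ∣ -z - c := by
    intro c hc hd
    apply hc
    have := (dvd_neg (α := ℤ)).2 hd
    rwa [show -(-z - c) = z - -c by ring] at this
  exact ⟨-z, by linarith, key _ h1, key _ h2, key _ h3, key _ h4⟩

lemma ndvd_neg {p : ℕ} {a b : ℤ} (h : ¬ (p : ℤ) ∣ a) (e : a = b ∨ a = -b) : ¬ (p : ℤ) ∣ b := by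
  rcases e with rfl | rfl
  · exact h
  · rwa [dvd_neg] at h

/-- Affine lemma. -/
lemma affine {p : ℕ} [hp : Fact p.Prime] (h5 : 5 ≤ p) {R : Type*} [CommRing R]
    (fa fb fc : ℤ → R) (L : ℤ)
    (h : ∀ i j : ℤ, ¬ (p : ℤ) ∣ i → ¬ (p : ℤ) ∣ j → ¬ (p : ℤ) ∣ i + j → L ≤ i - j →
      fa i + fc j = fb (i + j)) :
    ∃ κ ca cc : R, (∀ i : ℤ, ¬ (p : ℤ) ∣ i → fa i = κ * i + ca) ∧
      (∀ i : ℤ, ¬ (p : ℤ) ∣ i → fc i = κ * i + cc) ∧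
      (∀ i : ℤ, ¬ (p : ℤ) ∣ i → fb i = κ * i + (ca + cc)) := by
  -- difference relation
  have diff : ∀ i j d : ℤ, ¬ (p : ℤ) ∣ i → ¬ (p : ℤ) ∣ i + d → ¬ (p : ℤ) ∣ j → ¬ (p : ℤ) ∣ j - d →
      ¬ (p : ℤ) ∣ i + j → L ≤ i - j → L ≤ i + d - (j - d) →
      fa (i + d) - fa i = fc j - fc (j - d) := by
    intro i j d h1 h2 h3 h4 h5 h6 h7
    have e1 := h i j h1 h3 h5 h6
    have e2 := h (i + d) (j - d) h2 h4 (by convert h5 using 2; ring) h7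
    rw [show i + d + (j - d) = i + j by ring, ← e1] at e2
    linear_combination e2
  have hG : ∀ d : ℤ, ∃ g : R, ∀ i, ¬ (p : ℤ) ∣ i → ¬ (p : ℤ) ∣ i + d → fa (i + d) - fa i = g := by
    intro d
    obtain ⟨i0, -, hi0, hi0d, -, -⟩ := avoid_ge h5 0 (-d) 0 0 0
    refine ⟨fa (i0 + d) - fa i0, fun i hi hid => ?_⟩
    obtain ⟨j, hj, j1, j2, j3, j4⟩ := avoid_le h5 0 d (-i) (-i0)
      (-(|L| + |i| + |i0| + 2 * |d|))
    have := neg_abs_le i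
    have := neg_abs_le i0
    have := neg_abs_le d
    have := le_abs_self L
    have := abs_nonneg d
    have := abs_nonneg i
    have := abs_nonneg i0
    rw [diff i j d hi hid (by simpa using j1) j2 (by convert j3 using 2; ring) (by linarith)
      (by linarith),
      diff i0 j d (by simpa using hi0) (by simpa using hi0d) (by simpa using j1) j2
        (by convert j4 using 2; ring) (by linarith) (by linarith)]
  choose G hG using hG
  have hadd : ∀ d e, G (d + e) = G d + G e := by
    intro d e
    obtain ⟨i, -, i1, i2, i3, -⟩ := avoid_ge h5 0 (-d) (-(d+e)) 0 0
    have i1' : ¬ (p : ℤ) ∣ i := by simpa using i1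
    have i2' : ¬ (p : ℤ) ∣ i + d := by simpa using i2
    have i3' : ¬ (p : ℤ) ∣ i + (d + e) := by convert i3 using 2; ring
    rw [← hG (d + e) i i1' i3', ← hG d i i1' i2', ← hG e (i + d) i2' (by rwa [add_assoc]), add_assoc]
    ring
  have hlin : ∀ d : ℤ, G d = G 1 * d := by
    intro d
    let g : ℤ →+ R := AddMonoidHom.mk' G hadd
    have : g (d • 1) = d • g 1 := map_zsmul g d 1
    rw [smul_eq_mul, mul_one, zsmul_eq_mul, mul_comm] at this
    exact this
  have one : ¬ (p : ℤ) ∣ 1 := by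
    intro h
    have := Int.le_of_dvd (by norm_num) h
    omega
  have ha : ∀ i : ℤ, ¬ (p : ℤ) ∣ i → fa i = G 1 * i + (fa 1 - G 1) := by
    intro i hi
    have := hG (i - 1) 1 one (by simpa using hi)
    rw [hlin] at this
    rw [show 1 + (i - 1) = i by ring] at this
    push_cast at this
    linear_combination this
  have hc : ∀ i : ℤ, ¬ (p : ℤ) ∣ i → fc i = G 1 * i + (fc 1 - G 1) := by
    intro j hj
    obtain ⟨i, hi, i1, i2, i3, -⟩ := avoid_ge h5 0 (-(j - 1)) (-j) 0 (|L| + 2 * |j| + 2)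
    have := neg_abs_le j
    have := le_abs_self L
    have := le_abs_self j
    have := diff i j (j - 1) (by simpa using i1) (by convert i2 using 2; ring) hj
      (by simpa using one) (by convert i3 using 2; ring) (by linarith) (by linarith)
    rw [hG (j - 1) i (by simpa using i1) (by convert i2 using 2; ring), hlin] at this
    rw [show j - (j - 1) = 1 by ring] at this
    push_cast at this
    linear_combination -this
  refine ⟨G 1, fa 1 - G 1, fc 1 - G 1, ha, hc, ?_⟩
  intro l hl
  obtain ⟨i, hi, i1, i2, -, -⟩ := avoid_ge h5 0 l 0 0 (|L| + |l|)
  have i2' : ¬ (p : ℤ) ∣ l - i := ndvd_neg i2 (Or.inr (by ring))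
  have := neg_abs_le l
  have := le_abs_self L
  have := le_abs_self l
  have := abs_nonneg l
  have := abs_nonneg L
  have e := h i (l - i) (by simpa using i1) i2' (by simpa using hl) (by linarith)
  rw [show i + (l - i) = l by ring, ha i (by simpa using i1), hc _ i2'] at e
  rw [← e]
  push_cast
  ring

end Arith
end CAUE

namespace CAUE

section Forced

/-- A consistent family of digit tracks for the prime `p`. -/
structure Tracks (p : ℕ) (Da Db Dc : ℤ → ZMod (p ^ 2)) (ra rb rc : ZMod (p ^ 2)) : Prop where
  ua : ∀ u, redp p (Da u) ≠ 0
  ub : ∀ u, redp p (Db u) ≠ 0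
  uc : ∀ u, redp p (Dc u) ≠ 0
  da : ∀ u : ℤ, redp p (4 * u + ra) ≠ 0 → Da u = 4 * u + ra
  db : ∀ u : ℤ, redp p (4 * u + rb) ≠ 0 → Db u = 4 * u + rb
  dc : ∀ u : ℤ, redp p (4 * u + rc) ≠ 0 → Dc u = 4 * u + rc
  rr : ra + rc = rb
  rel : ∀ u w : ℤ, w ≤ u → Rel p (Da u) (Db (u + w)) (Dc w)

variable {p : ℕ} [hp : Fact p.Prime] {Da Db Dc : ℤ → ZMod (p ^ 2)} {ra rb rc : ZMod (p ^ 2)}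

/-- Level `k` is resolved with centres `α, γ` and multiplier `κ`. -/
def Good (Da Db Dc : ℤ → ZMod (p ^ 2)) (k : ℕ) (α γ : ℤ) (κ : ZMod (p ^ 2)) : Prop :=
  redp p κ ≠ 0 ∧ ∀ i : ℤ, ¬ (p : ℤ) ∣ i → Da (α + p ^ k * i) = κ * i ∧ Dc (γ + p ^ k * i) = κ * i ∧
    Db (α + γ + p ^ k * i) = κ * i

lemma four_ne (h5 : 5 ≤ p) : (4 : ZMod p) ≠ 0 := by
  intro h
  have : ((4 : ℕ) : ZMod p) = 0 := by exact_mod_cast h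
  rw [ZMod.natCast_eq_zero_iff] at this
  have := Nat.le_of_dvd (by norm_num) this
  omega

lemma isUnit_of_redp {x : ZMod (p ^ 2)} (h : redp p x ≠ 0) : IsUnit x := by
  have e : ((x.val : ℕ) : ZMod (p ^ 2)) = x := ZMod.natCast_zmod_val x
  rw [← e, ZMod.isUnit_iff_coprime]
  rw [← e, map_natCast, Ne, ZMod.natCast_eq_zero_iff] at h
  exact Nat.Coprime.pow_right 2 ((Nat.Prime.coprime_iff_not_dvd hp.1).2 h).symm

lemma exists_int_mul {x : ZMod (p ^ 2)} (h : redp p x ≠ 0) (y : ZMod (p ^ 2)) :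
    ∃ i : ℤ, x * (i : ZMod (p ^ 2)) = y := by
  obtain ⟨u, rfl⟩ := isUnit_of_redp h
  obtain ⟨i, hi⟩ := ZMod.intCast_surjective ((↑u⁻¹ : ZMod (p ^ 2)) * y)
  refine ⟨i, ?_⟩
  rw [hi, ← mul_assoc, Units.mul_inv, one_mul]

lemma good_zero (h5 : 5 ≤ p) (T : Tracks p Da Db Dc ra rb rc) :
    ∃ α γ κ, Good Da Db Dc 0 α γ κ ∧ 4 * (α : ZMod (p ^ 2)) + ra = 0 ∧
      4 * (γ : ZMod (p ^ 2)) + rc = 0 := by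
  have h4 : redp p 4 ≠ 0 := by
    rw [map_ofNat]; exact four_ne h5
  obtain ⟨α, hα⟩ := exists_int_mul h4 (-ra)
  obtain ⟨γ, hγ⟩ := exists_int_mul h4 (-rc)
  refine ⟨α, γ, 4, ⟨h4, fun i hi => ?_⟩, by rw [hα]; ring, by rw [hγ]; ring⟩
  have hu : redp p (4 * (i : ZMod (p ^ 2))) ≠ 0 := by
    rw [map_mul, map_intCast]; exact mul_ne_zero h4 (cast_ne hi)
  have ea : 4 * ((α + (p : ℤ) ^ 0 * i : ℤ) : ZMod (p ^ 2)) + ra = 4 * i := by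
    push_cast; linear_combination hα
  have ec : 4 * ((γ + (p : ℤ) ^ 0 * i : ℤ) : ZMod (p ^ 2)) + rc = 4 * i := by
    push_cast; linear_combination hγ
  have eb : 4 * ((α + γ + (p : ℤ) ^ 0 * i : ℤ) : ZMod (p ^ 2)) + rb = 4 * i := by
    rw [← T.rr]; push_cast; linear_combination hα + hγ
  refine ⟨?_, ?_, ?_⟩
  · rw [T.da _ (by rw [ea]; exact hu), ea]
  · rw [T.dc _ (by rw [ec]; exact hu), ec]
  · rw [T.db _ (by rw [eb]; exact hu), eb]

lemma good_step (h5 : 5 ≤ p) (T : Tracks p Da Db Dc ra rb rc) {k : ℕ} {α γ : ℤ} {κ : ZMod (p ^ 2)}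
    (hG : Good Da Db Dc k α γ κ) : ∃ α' γ' κ', Good Da Db Dc (k + 1) α' γ' κ' ∧
      (∃ σ : ℤ, α' = α - p ^ (k + 2) * σ) ∧ (∃ σ : ℤ, γ' = γ - p ^ (k + 2) * σ) ∧
      redp p κ' = redp p κ := by
  obtain ⟨hκ, hg⟩ := hG
  have ppos : (0 : ℤ) < p := by exact_mod_cast hp.1.pos
  have pk : (1 : ℤ) ≤ (p : ℤ) ^ k := one_le_pow₀ (by omega)
  have pk1 : (1 : ℤ) ≤ (p : ℤ) ^ (k + 1) := one_le_pow₀ (by omega)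
  have hlift : ∀ {s : ℤ}, ¬ (p : ℤ) ∣ s → (s : ZMod p) ≠ 0 := fun h => cast_ne h
  -- a large multiple
  have big : ∀ e N : ℤ, ∃ t : ℤ, N ≤ e + p * t := by
    intro e N
    refine ⟨|N| + |e|, ?_⟩
    have : (|N| + |e|) ≤ p * (|N| + |e|) := le_mul_of_one_le_left (by positivity) (by omega)
    have := neg_abs_le e
    have := le_abs_self N
    linarith
  have ndm : ∀ s i : ℤ, ¬ (p : ℤ) ∣ i → ¬ (p : ℤ) ∣ p * s + i := by
    intro s i hi h
    exact hi ((dvd_add_right (dvd_mul_right _ _)).1 h)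
  have ndm' : ∀ s i : ℤ, ¬ (p : ℤ) ∣ i → ¬ (p : ℤ) ∣ p * s - i := by
    intro s i hi h
    exact hi ((dvd_sub_right (dvd_mul_right _ _)).1 h)
  have nd1 : ¬ (p : ℤ) ∣ 1 := fun h => by have := Int.le_of_dvd (by norm_num) h; omega
  have nd2 : ¬ (p : ℤ) ∣ 2 := fun h => by have := Int.le_of_dvd (by norm_num) h; omega
  -- first digits
  have fb : ∀ s : ℤ, ¬ (p : ℤ) ∣ s → redp p (Db (α + γ + p ^ (k + 1) * s)) = redp p κ * s := by
    intro s hs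
    have key : ∀ e : ℤ, ¬ (p : ℤ) ∣ e → redp p (Db (α + γ + p ^ (k + 1) * s)) = redp p κ * e ∨
        redp p (Db (α + γ + p ^ (k + 1) * s)) = - (redp p κ * e) ∨
        redp p (Db (α + γ + p ^ (k + 1) * s)) = redp p κ * s := by
      intro e he
      obtain ⟨t, ht⟩ := big e (|γ - α| + |p * s|)
      have hi : ¬ (p : ℤ) ∣ e + p * t := by rw [add_comm]; exact ndm _ _ he
      have hle : γ + p ^ k * (p * s - (e + p * t)) ≤ α + p ^ k * (e + p * t) := by
        have h1 : |γ - α| ≤ p ^ k * (2 * (e + p * t) - p * s) := by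
          refine le_trans ?_ (le_mul_of_one_le_left ?_ pk)
          · have := le_abs_self ((p : ℤ) * s); have := abs_nonneg ((p : ℤ) * s)
            have := abs_nonneg (γ - α); linarith
          · have := le_abs_self ((p : ℤ) * s); have := abs_nonneg ((p : ℤ) * s)
            have := abs_nonneg (γ - α); linarith
        have := le_abs_self (γ - α)
        linarith
      have hr := T.rel _ _ hle
      rw [(hg _ hi).1, (hg _ (ndm' s _ hi)).2.1,
        show α + (p : ℤ) ^ k * (e + p * t) + (γ + p ^ k * (p * s - (e + p * t)))
          = α + γ + p ^ (k + 1) * s by ring] at hr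
      have := Rel.middle hκ (T.ub _) (hlift hs) hr
      simpa using this
    exact two_class h5 hκ (key 1 nd1) (key 2 nd2)
  have fa : ∀ s : ℤ, ¬ (p : ℤ) ∣ s → redp p (Da (α + p ^ (k + 1) * s)) = redp p κ * s := by
    intro s hs
    have key : ∀ e : ℤ, ¬ (p : ℤ) ∣ e → redp p (Da (α + p ^ (k + 1) * s)) = redp p κ * e ∨
        redp p (Da (α + p ^ (k + 1) * s)) = - (redp p κ * e) ∨
        redp p (Da (α + p ^ (k + 1) * s)) = redp p κ * s := by
      intro e he
      obtain ⟨t, ht⟩ := big (-e) (|γ - α| + |p ^ (k + 1) * s|)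
      have hi : ¬ (p : ℤ) ∣ e + p * (-t) := by rw [add_comm]; exact ndm _ _ he
      have hle : γ + p ^ k * (e + p * (-t)) ≤ α + p ^ (k + 1) * s := by
        have h1 : |γ - α| + |p ^ (k + 1) * s| ≤ p ^ k * (-e + p * t) :=
          le_trans ht (le_mul_of_one_le_left (le_trans (by positivity) ht) pk)
        have := neg_abs_le (p ^ (k + 1) * s)
        have := le_abs_self (γ - α)
        linarith
      have hr := T.rel _ _ hle
      rw [(hg _ hi).2.1, show α + (p : ℤ) ^ (k + 1) * s + (γ + p ^ k * (e + p * (-t)))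
          = α + γ + p ^ k * (p * s + (e + p * (-t))) by ring, (hg _ (ndm s _ hi)).2.2] at hr
      have := Rel.side hκ (T.ua _) (hlift hs) hr
      simpa using this
    exact two_class h5 hκ (key 1 nd1) (key 2 nd2)
  have fc : ∀ s : ℤ, ¬ (p : ℤ) ∣ s → redp p (Dc (γ + p ^ (k + 1) * s)) = redp p κ * s := by
    intro s hs
    have key : ∀ e : ℤ, ¬ (p : ℤ) ∣ e → redp p (Dc (γ + p ^ (k + 1) * s)) = redp p κ * e ∨
        redp p (Dc (γ + p ^ (k + 1) * s)) = - (redp p κ * e) ∨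
        redp p (Dc (γ + p ^ (k + 1) * s)) = redp p κ * s := by
      intro e he
      obtain ⟨t, ht⟩ := big e (|γ - α| + |p ^ (k + 1) * s|)
      have hi : ¬ (p : ℤ) ∣ e + p * t := by rw [add_comm]; exact ndm _ _ he
      have hle : γ + p ^ (k + 1) * s ≤ α + p ^ k * (e + p * t) := by
        have h1 : |γ - α| + |p ^ (k + 1) * s| ≤ p ^ k * (e + p * t) :=
          le_trans ht (le_mul_of_one_le_left (le_trans (by positivity) ht) pk)
        have := le_abs_self (p ^ (k + 1) * s)
        have := le_abs_self (γ - α)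
        linarith
      have hr := (T.rel _ _ hle).symm
      rw [(hg _ hi).1, show α + p ^ k * (e + p * t) + (γ + (p : ℤ) ^ (k + 1) * s)
          = α + γ + p ^ k * (p * s + (e + p * t)) by ring, (hg _ (ndm s _ hi)).2.2] at hr
      have := Rel.side hκ (T.uc _) (hlift hs) hr
      simpa using this
    exact two_class h5 hκ (key 1 nd1) (key 2 nd2)
  -- additivity
  obtain ⟨κ', ca, cc, Ha, Hc, Hb⟩ := affine h5 (fun i => Da (α + p ^ (k + 1) * i))
    (fun i => Db (α + γ + p ^ (k + 1) * i)) (fun i => Dc (γ + p ^ (k + 1) * i)) (|γ - α|) (by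
      intro i j hi hj hij hL
      have hle : γ + p ^ (k + 1) * j ≤ α + p ^ (k + 1) * i := by
        have h1 : |γ - α| ≤ p ^ (k + 1) * (i - j) :=
          le_trans hL (le_mul_of_one_le_left (le_trans (by positivity) hL) pk1)
        have := le_abs_self (γ - α)
        linarith
      have hr := T.rel _ _ hle
      rw [show α + (p : ℤ) ^ (k + 1) * i + (γ + p ^ (k + 1) * j)
        = α + γ + p ^ (k + 1) * (i + j) by ring] at hr
      refine (hr.sum (T.ua _) (T.uc _) (T.ub _) ?_).symm
      rw [fa i hi, fb _ hij, fc j hj]; push_cast; ring)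
  -- constants
  have a1 := fa 1 nd1
  have a2 := fa 2 nd2
  have c1 := fc 1 nd1
  rw [Ha 1 nd1, map_add, map_mul, map_intCast] at a1
  rw [Ha 2 nd2, map_add, map_mul, map_intCast] at a2
  rw [Hc 1 nd1, map_add, map_mul, map_intCast] at c1
  push_cast at a1 a2 c1
  have hκ' : redp p κ' = redp p κ := by linear_combination a2 - a1
  have hca : redp p ca = 0 := by linear_combination 2 * a1 - a2
  have hcc : redp p cc = 0 := by linear_combination c1 - hκ'
  have hκ0 : redp p κ' ≠ 0 := by rw [hκ']; exact hκ
  obtain ⟨ya, rfl⟩ := (redp_eq_zero _).1 hca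
  obtain ⟨yc, rfl⟩ := (redp_eq_zero _).1 hcc
  obtain ⟨σa, rfl⟩ := exists_int_mul hκ0 ya
  obtain ⟨σc, rfl⟩ := exists_int_mul hκ0 yc
  refine ⟨α - p ^ (k + 2) * σa, γ - p ^ (k + 2) * σc, κ', ⟨hκ0, fun i hi => ⟨?_, ?_, ?_⟩⟩,
    ⟨σa, rfl⟩, ⟨σc, rfl⟩, hκ'⟩
  · have hd := ndm (-σa) i hi
    rw [show α - (p : ℤ) ^ (k + 2) * σa + p ^ (k + 1) * i
      = α + p ^ (k + 1) * (p * (-σa) + i) by ring, Ha _ hd]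
    push_cast; ring
  · have hd := ndm (-σc) i hi
    rw [show γ - (p : ℤ) ^ (k + 2) * σc + p ^ (k + 1) * i
      = γ + p ^ (k + 1) * (p * (-σc) + i) by ring, Hc _ hd]
    push_cast; ring
  · have hd := ndm (-σa - σc) i hi
    rw [show α - (p : ℤ) ^ (k + 2) * σa + (γ - (p : ℤ) ^ (k + 2) * σc) + p ^ (k + 1) * i
      = α + γ + p ^ (k + 1) * (p * (-σa - σc) + i) by ring, Hb _ hd]
    push_cast; ring

lemma good_seq (h5 : 5 ≤ p) (T : Tracks p Da Db Dc ra rb rc) :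
    ∃ (α γ : ℕ → ℤ) (κ : ℕ → ZMod (p ^ 2)), (∀ k, Good Da Db Dc k (α k) (γ k) (κ k)) ∧
      4 * (α 0 : ZMod (p ^ 2)) + ra = 0 ∧ 4 * (γ 0 : ZMod (p ^ 2)) + rc = 0 ∧
      (∀ k, ∃ σ : ℤ, α (k + 1) = α k - p ^ (k + 2) * σ) ∧
      (∀ k, ∃ σ : ℤ, γ (k + 1) = γ k - p ^ (k + 2) * σ) ∧
      (∀ k, redp p (κ (k + 1)) = redp p (κ k)) := by
  obtain ⟨α0, γ0, κ0, h0, e1, e2⟩ := good_zero h5 T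
  choose α' γ' κ' hs using fun (k : ℕ) (α γ : ℤ) (κ : ZMod (p ^ 2))
    (h : Good Da Db Dc k α γ κ) => good_step h5 T h
  let S : (k : ℕ) → {t : ℤ × ℤ × ZMod (p ^ 2) // Good Da Db Dc k t.1 t.2.1 t.2.2} := fun k =>
    Nat.rec ⟨(α0, γ0, κ0), h0⟩ (fun k t => ⟨(α' k _ _ _ t.2, γ' k _ _ _ t.2, κ' k _ _ _ t.2),
      (hs k _ _ _ t.2).1⟩) k
  refine ⟨fun k => (S k).1.1, fun k => (S k).1.2.1, fun k => (S k).1.2.2, fun k => (S k).2, e1, e2,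
    fun k => (hs k _ _ _ (S k).2).2.1, fun k => (hs k _ _ _ (S k).2).2.2.1,
    fun k => (hs k _ _ _ (S k).2).2.2.2⟩

end Forced
end CAUE

namespace CAUE

section Levels

/-- Contains a full residue class modulo a power of `p`. -/
def Prog (p : ℕ) (S : ℤ → Prop) : Prop :=
  ∃ (m : ℕ) (r : ℤ), ∀ t : ℤ, S (r + p ^ m * t)

/-- Equal levels detected. -/
def IsEq (p : ℕ) (x z y : ZMod (p ^ 2)) : Prop := z = x + y

/-- The level of `y` is one more than that of `x`. -/
def IsSucc (p : ℕ) (x z y : ZMod (p ^ 2)) : Prop :=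
  z = x + p * y ∧ redp p x + redp p y ≠ 0 ∧ redp p x - redp p y ≠ 0

variable {p : ℕ} [hp : Fact p.Prime] {Da Db Dc : ℤ → ZMod (p ^ 2)} {ra rb rc : ZMod (p ^ 2)}

theorem levels (h5 : 5 ≤ p) (T : Tracks p Da Db Dc ra rb rc) :
    ∃ LA LC : ℕ → ℤ → Prop,
      (∀ u : ℤ, LA 0 u → redp p (4 * u + ra) ≠ 0) ∧
      (∀ u : ℤ, LC 0 u → redp p (4 * u + rc) ≠ 0) ∧
      (∀ v, Prog p (LA v)) ∧
      (∀ v w, LC v w → Prog p (fun u => LA v u ∧ IsEq p (Da u) (Db (u + w)) (Dc w))) ∧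
      (∀ v u, LA v u → Prog p (fun w => LC v w ∧ IsEq p (Da u) (Db (u + w)) (Dc w))) ∧
      (∀ v w, LC (v + 1) w → Prog p (fun u => LA v u ∧ IsSucc p (Da u) (Db (u + w)) (Dc w))) ∧
      (∀ v w, LC v w → Prog p (fun u => LA (v + 1) u ∧ IsSucc p (Dc w) (Db (u + w)) (Da u))) := by
  obtain ⟨α, γ, κ, hG, hα0, hγ0, hα, hγ, hκ⟩ := good_seq h5 T
  have nd : ∀ e : ℤ, 1 ≤ e → e ≤ 4 → ¬ (p : ℤ) ∣ e := by
    intro e h1 h2 h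
    have := Int.le_of_dvd (by omega) h
    omega
  have pp : Prime (p : ℤ) := Nat.prime_iff_prime_int.1 hp.1
  have ndm : ∀ s i : ℤ, ¬ (p : ℤ) ∣ i → ¬ (p : ℤ) ∣ i + p * s := by
    intro s i hi h
    exact hi ((dvd_add_left (dvd_mul_right _ _)).1 h)
  have ndmul : ∀ e i : ℤ, 1 ≤ e → e ≤ 4 → ¬ (p : ℤ) ∣ i → ¬ (p : ℤ) ∣ e * i := by
    intro e i h1 h2 hi h
    rcases pp.dvd_or_dvd h with h | h
    · exact nd e h1 h2 h
    · exact hi h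
  have h4 : redp p 4 ≠ 0 := by
    rw [map_ofNat]; exact four_ne h5
  refine ⟨fun v u => ∃ i : ℤ, ¬ (p : ℤ) ∣ i ∧ u = α v + p ^ v * i,
    fun v u => ∃ i : ℤ, ¬ (p : ℤ) ∣ i ∧ u = γ v + p ^ v * i, ?_, ?_, ?_, ?_, ?_, ?_, ?_⟩
  · rintro u ⟨i, hi, rfl⟩
    rw [show 4 * ((α 0 + (p : ℤ) ^ 0 * i : ℤ) : ZMod (p ^ 2)) + ra = 4 * i by
      push_cast; linear_combination hα0, map_mul, map_intCast]
    exact mul_ne_zero h4 (cast_ne hi)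
  · rintro u ⟨i, hi, rfl⟩
    rw [show 4 * ((γ 0 + (p : ℤ) ^ 0 * i : ℤ) : ZMod (p ^ 2)) + rc = 4 * i by
      push_cast; linear_combination hγ0, map_mul, map_intCast]
    exact mul_ne_zero h4 (cast_ne hi)
  · intro v
    refine ⟨v + 1, α v + p ^ v * 1, fun t => ⟨1 + p * t, ndm _ _ (nd 1 (by omega) (by omega)), by ring⟩⟩
  · rintro v w ⟨j, hj, rfl⟩
    refine ⟨v + 1, α v + p ^ v * j, fun t => ?_⟩
    have e1 : α v + (p : ℤ) ^ v * j + p ^ (v + 1) * t = α v + p ^ v * (j + p * t) := by ring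
    refine ⟨⟨j + p * t, ndm _ _ hj, e1⟩, ?_⟩
    unfold IsEq
    rw [e1, ((hG v).2 _ (ndm t _ hj)).1, ((hG v).2 _ hj).2.1,
      show α v + (p : ℤ) ^ v * (j + p * t) + (γ v + p ^ v * j)
        = α v + γ v + p ^ v * (2 * j + p * t) by ring,
      ((hG v).2 _ (ndm t _ (ndmul 2 j (by omega) (by omega) hj))).2.2]
    push_cast; ring
  · rintro v w ⟨j, hj, rfl⟩
    refine ⟨v + 1, γ v + p ^ v * j, fun t => ?_⟩
    have e1 : γ v + (p : ℤ) ^ v * j + p ^ (v + 1) * t = γ v + p ^ v * (j + p * t) := by ring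
    refine ⟨⟨j + p * t, ndm _ _ hj, e1⟩, ?_⟩
    unfold IsEq
    rw [e1, ((hG v).2 _ (ndm t _ hj)).2.1, ((hG v).2 _ hj).1,
      show α v + (p : ℤ) ^ v * j + (γ v + p ^ v * (j + p * t))
        = α v + γ v + p ^ v * (2 * j + p * t) by ring,
      ((hG v).2 _ (ndm t _ (ndmul 2 j (by omega) (by omega) hj))).2.2]
    push_cast; ring
  · rintro v w ⟨j, hj, rfl⟩
    obtain ⟨σ, hσ⟩ := hγ v
    refine ⟨v + 1, α v + p ^ v * (2 * j), fun t => ?_⟩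
    have e1 : α v + (p : ℤ) ^ v * (2 * j) + p ^ (v + 1) * t = α v + p ^ v * (2 * j + p * t) := by ring
    have h2 := ndmul 2 j (by omega) (by omega) hj
    have h3 := ndmul 3 j (by omega) (by omega) hj
    refine ⟨⟨2 * j + p * t, ndm _ _ h2, e1⟩, ?_⟩
    have ex := ((hG v).2 _ (ndm t _ h2)).1
    have ey := ((hG (v + 1)).2 _ hj).2.1
    have ez : Db (α v + (p : ℤ) ^ v * (2 * j + p * t) + (γ (v + 1) + p ^ (v + 1) * j))
        = κ v * (2 * j + p * t) + p * (κ v * j) := by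
      rw [hσ, show α v + (p : ℤ) ^ v * (2 * j + p * t) + (γ v - p ^ (v + 2) * σ + p ^ (v + 1) * j)
        = α v + γ v + p ^ v * (2 * j + p * (t + j - p * σ)) by ring,
        ((hG v).2 _ (ndm _ _ h2)).2.2]
      have hp2 : (p : ZMod (p ^ 2)) * p = 0 := by rw [redp_pmul, redp_p]
      push_cast
      linear_combination -κ v * σ * hp2
    refine ⟨?_, ?_, ?_⟩
    · rw [e1, ex, ey, ez, pmul_congr (x := κ (v + 1) * _) (y := κ v * (j : ZMod (p ^ 2)))]
      · push_cast; rfl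
      · rw [map_mul, map_mul, hκ]
    · rw [e1, ex, ey, map_mul, map_mul, hκ, ← mul_add]
      refine mul_ne_zero (hG v).1 ?_
      rw [map_intCast, map_intCast, ← Int.cast_add]
      apply cast_ne
      rw [show 2 * j + p * t + j = 3 * j + p * t by ring]
      exact ndm _ _ h3
    · rw [e1, ex, ey, map_mul, map_mul, hκ, ← mul_sub]
      refine mul_ne_zero (hG v).1 ?_
      rw [map_intCast, map_intCast, ← Int.cast_sub]
      apply cast_ne
      rw [show 2 * j + p * t - j = j + p * t by ring]
      exact ndm _ _ hj
  · rintro v w ⟨j, hj, rfl⟩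
    obtain ⟨σ, hσ⟩ := hα v
    have h2 := ndmul 2 j (by omega) (by omega) hj
    have h3 := ndmul 3 j (by omega) (by omega) hj
    refine ⟨v + 2, α (v + 1) + p ^ (v + 1) * (2 * j), fun t => ?_⟩
    have e1 : α (v + 1) + (p : ℤ) ^ (v + 1) * (2 * j) + p ^ (v + 2) * t
      = α (v + 1) + p ^ (v + 1) * (2 * j + p * t) := by ring
    refine ⟨⟨2 * j + p * t, ndm _ _ h2, e1⟩, ?_⟩
    have ex := ((hG (v + 1)).2 _ (ndm t _ h2)).1
    have ey := ((hG v).2 _ hj).2.1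
    have ez : Db (α (v + 1) + (p : ℤ) ^ (v + 1) * (2 * j + p * t) + (γ v + p ^ v * j))
        = κ v * j + p * (κ v * (2 * j + p * t)) := by
      rw [hσ, show α v - (p : ℤ) ^ (v + 2) * σ + p ^ (v + 1) * (2 * j + p * t) + (γ v + p ^ v * j)
        = α v + γ v + p ^ v * (j + p * (2 * j + p * t - p * σ)) by ring,
        ((hG v).2 _ (ndm _ _ hj)).2.2]
      have hp2 : (p : ZMod (p ^ 2)) * p = 0 := by rw [redp_pmul, redp_p]
      push_cast
      linear_combination -κ v * σ * hp2
    refine ⟨?_, ?_, ?_⟩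
    · rw [e1, ex, ey, ez, pmul_congr (x := κ (v + 1) * _) (y := κ v * ((2 * j + p * t : ℤ) : ZMod (p ^ 2)))]
      · push_cast; rfl
      · rw [map_mul, map_mul, hκ]
    · rw [e1, ex, ey, map_mul, map_mul, hκ, ← mul_add]
      refine mul_ne_zero (hG v).1 ?_
      rw [map_intCast, map_intCast, ← Int.cast_add]
      apply cast_ne
      rw [show j + (2 * j + p * t) = 3 * j + p * t by ring]
      exact ndm _ _ h3
    · rw [e1, ex, ey, map_mul, map_mul, hκ, ← mul_sub]
      refine mul_ne_zero (hG v).1 ?_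
      rw [map_intCast, map_intCast, ← Int.cast_sub]
      apply cast_ne
      refine ndvd_neg (ndm t _ hj) (Or.inr (by ring))

end Levels
end CAUE

namespace CAUE

section Tiling

/-- Distinct primes, all at least `5`. -/
noncomputable def pr (i : ℕ) : ℕ := Nat.nth Nat.Prime (i + 2)

instance pr_fact (i : ℕ) : Fact (pr i).Prime := ⟨Nat.nth_mem_of_infinite Nat.infinite_setOfPred_prime _⟩

lemma pr_inj : Function.Injective pr := by
  intro i j h
  have := Nat.nth_injective Nat.infinite_setOfPred_prime h
  omega

lemma pr_ge (i : ℕ) : 5 ≤ pr i := by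
  have h : Nat.nth Nat.Prime 2 ≤ pr i := Nat.nth_monotone Nat.infinite_setOfPred_prime (by omega)
  rw [Nat.nth_prime_two_eq_five] at h
  exact h

/-- Residue and unit digits for each prime. -/
abbrev DT (k : ℕ) : Type := ∀ i : Fin (k + 1), ZMod (pr i ^ 2) × ZMod (pr i ^ 2)

/-- The finite part of the state. -/
abbrev YT (Q : Type) (k : ℕ) : Type := (DT k × Set Q) × DT k × (DT k × Set Q)

/-- Digit constraint. -/
def okD (p : ℕ) (a b c : ZMod (p ^ 2) × ZMod (p ^ 2)) : Prop :=
  a.1 + c.1 = b.1 ∧ (redp p a.1 ≠ 0 → a.2 = a.1) ∧ (redp p b.1 ≠ 0 → b.2 = b.1) ∧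
  (redp p c.1 ≠ 0 → c.2 = c.1) ∧ redp p a.2 ≠ 0 ∧ redp p b.2 ≠ 0 ∧ redp p c.2 ≠ 0 ∧
  Rel p a.2 b.2 c.2

/-- Detection of an action in one coordinate. -/
def detI (p : ℕ) (i : ℕ) (a b c : ZMod (p ^ 2) × ZMod (p ^ 2)) : Act → Prop
  | .stay => IsEq p a.2 b.2 c.2
  | .up j => if i = j then IsSucc p a.2 b.2 c.2 else IsEq p a.2 b.2 c.2
  | .down j => if i = j then IsSucc p c.2 b.2 a.2 else IsEq p a.2 b.2 c.2
  | .zero j => IsEq p a.2 b.2 c.2 ∧ (i = j → redp p a.1 ≠ 0)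

/-- Detection of an action. -/
def det {k : ℕ} (δ : Act) (a b c : DT k) : Prop :=
  ∀ i : Fin (k + 1), detI (pr i) i (a i) (b i) (c i) δ

variable {Q : Type} (C : Set (Clause Q)) (k : ℕ) (P : Q)

/-- Constraint on the finite part. -/
def okY (y : YT Q k) : Prop :=
  (∀ i : Fin (k + 1), okD (pr i) (y.1.1 i) (y.2.1 i) (y.2.2.1 i)) ∧
  (∀ c ∈ C, det c.act y.1.1 y.2.1 y.2.2.1 → c.body ⊆ y.1.2 → c.head ∈ y.2.2.2) ∧
  (det .stay y.1.1 y.2.1 y.2.2.1 → y.1.2 = y.2.2.2)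

/-- Constraint on the counter part. -/
def okE (n : ℕ) (y : YT Q k) (a c : ℕ) : Prop :=
  (redp (pr ((0 : Fin (k + 1)) : ℕ)) (y.1.1 0).1 ≠ 0 → a = 0) ∧
  (redp (pr ((0 : Fin (k + 1)) : ℕ)) (y.2.2.1 0).1 ≠ 0 → c = 0) ∧
  (IsEq (pr ((0 : Fin (k + 1)) : ℕ)) (y.1.1 0).2 (y.2.1 0).2 (y.2.2.1 0).2 → a = c) ∧
  (IsSucc (pr ((0 : Fin (k + 1)) : ℕ)) (y.1.1 0).2 (y.2.1 0).2 (y.2.2.1 0).2 → c = min (a + 1) (n + 1)) ∧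
  (P ∈ y.1.2 → a ≠ n)

/-- Neighbouring cells. -/
def adjY (y z : YT Q k) : Prop :=
  ∀ i, (z.1.1 i).1 = (y.1.1 i).1 + 2 ∧ (z.2.1 i).1 = (y.2.1 i).1 + 4 ∧
    (z.2.2.1 i).1 = (y.2.2.1 i).1 + 2

/-- An immortal configuration, in terms of its three tracks. -/
def IsTiling (n : ℕ) (A : ℤ → DT k × Set Q) (B : ℤ → DT k) (G : ℤ → DT k × Set Q)
    (eA eC : ℤ → ℕ) : Prop :=
  (∀ x, adjY k (A x, B x, G x) (A (x + 1), B (x + 1), G (x + 1))) ∧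
  (∀ x : ℤ, ∀ t : ℕ, okY C k (A (x + t), B x, G (x - t)) ∧
    okE k P n (A (x + t), B x, G (x - t)) (eA (x + t)) (eC (x - t)))

lemma crt {S : Fin (k + 1) → ℤ → Prop} (h : ∀ i : Fin (k + 1), Prog (pr i) (S i)) :
    ∃ r M : ℤ, 0 < M ∧ ∀ t i, S i (r + M * t) := by
  choose m r hS using h
  have hM : ∀ i : Fin (k + 1), 0 < pr i ^ m i := fun i => pow_pos (pr_fact i).1.pos _
  obtain ⟨z, hz⟩ := Nat.chineseRemainderOfFinset (fun i : Fin (k + 1) => ((r i) % ((pr i ^ m i : ℕ) : ℤ)).toNat)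
    (fun i : Fin (k + 1) => pr i ^ m i) Finset.univ (fun i _ => (hM i).ne') (by
      intro i _ j _ hij
      apply Nat.Coprime.pow
      rw [Nat.coprime_primes (pr_fact i).1 (pr_fact j).1]
      intro h
      exact hij (Fin.ext (pr_inj h)))
  refine ⟨z, ((∏ i : Fin (k + 1), pr i ^ m i : ℕ) : ℤ), by exact_mod_cast Finset.prod_pos fun i _ => hM i, fun t i => ?_⟩
  have h1 := hz i (Finset.mem_univ i)
  have h2 : (z : ℤ) ≡ r i [ZMOD ((pr i ^ m i : ℕ) : ℤ)] := by
    have h3 := (Int.natCast_modEq_iff).2 h1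
    rw [Int.toNat_of_nonneg (Int.emod_nonneg _ (by exact_mod_cast (hM i).ne'))] at h3
    exact h3.trans (Int.mod_modEq _ _)
  obtain ⟨s, hs⟩ := h2.symm.dvd
  obtain ⟨q, hq⟩ : pr i ^ m i ∣ ∏ i : Fin (k + 1), pr i ^ m i := Finset.dvd_prod_of_mem (fun i : Fin (k + 1) => pr i ^ m i) (Finset.mem_univ i)
  have := hS i (s + q * t)
  convert this using 1
  rw [hq]
  push_cast at *
  linear_combination hs

lemma crt_ge {S : Fin (k + 1) → ℤ → Prop} (h : ∀ i : Fin (k + 1), Prog (pr i) (S i)) (N : ℤ) :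
    ∃ u, N ≤ u ∧ ∀ i, S i u := by
  obtain ⟨r, M, hM, hS⟩ := crt k h
  refine ⟨r + M * (|N| + |r|), ?_, fun i => hS _ i⟩
  have := le_abs_self N
  have := neg_abs_le r
  nlinarith [abs_nonneg N, abs_nonneg r]

lemma crt_le {S : Fin (k + 1) → ℤ → Prop} (h : ∀ i : Fin (k + 1), Prog (pr i) (S i)) (N : ℤ) :
    ∃ u, u ≤ N ∧ ∀ i, S i u := by
  obtain ⟨r, M, hM, hS⟩ := crt k h
  refine ⟨r + M * (-(|N| + |r|)), ?_, fun i => hS _ i⟩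
  have := neg_abs_le N
  have := le_abs_self r
  nlinarith [abs_nonneg N, abs_nonneg r]

lemma lin_of_step {R : Type*} [CommRing R] {g : ℤ → R} {d : R} (h : ∀ x, g (x + 1) = g x + d) (x : ℤ) :
    g x = g 0 + d * x := by
  induction x with
  | zero => simp
  | succ i ih => rw [h, ih]; push_cast; ring
  | pred i ih =>
    have := h (-(i : ℤ) - 1)
    rw [sub_add_cancel, ih] at this
    push_cast at *
    linear_combination -this

theorem forced (n : ℕ) {A : ℤ → DT k × Set Q} {B : ℤ → DT k} {G : ℤ → DT k × Set Q}
    {eA eC : ℤ → ℕ} (h : IsTiling C k P n A B G eA eC) : ¬ ∃ v : ℕ → ℕ, v 0 = n ∧ Der C P v := by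
  obtain ⟨hadj, hok⟩ := h
  have rA : ∀ i x, ((A x).1 i).1 = ((A 0).1 i).1 + 2 * x := fun i x =>
    lin_of_step (g := fun x => ((A x).1 i).1) (fun x => (hadj x i).1) x
  have rB : ∀ i x, (B x i).1 = (B 0 i).1 + 4 * x := fun i x =>
    lin_of_step (g := fun x => (B x i).1) (fun x => (hadj x i).2.1) x
  have rC : ∀ i x, ((G x).1 i).1 = ((G 0).1 i).1 + 2 * x := fun i x =>
    lin_of_step (g := fun x => ((G x).1 i).1) (fun x => (hadj x i).2.2) x
  have ok1 : ∀ u w : ℤ, w ≤ u → okY C k (A (2 * u), B (u + w), G (2 * w)) ∧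
      okE k P n (A (2 * u), B (u + w), G (2 * w)) (eA (2 * u)) (eC (2 * w)) := by
    intro u w huw
    have := hok (u + w) (u - w).toNat
    rw [Int.toNat_of_nonneg (by omega), show u + w + (u - w) = 2 * u by ring,
      show u + w - (u - w) = 2 * w by ring] at this
    exact this
  have T : ∀ i : Fin (k + 1), Tracks (pr i) (fun u => ((A (2 * u)).1 i).2) (fun u => (B u i).2)
      (fun u => ((G (2 * u)).1 i).2) ((A 0).1 i).1 (B 0 i).1 ((G 0).1 i).1 := by
    intro i
    have e4 : ∀ (f : ZMod (pr i ^ 2)) (u : ℤ), 4 * (u : ZMod (pr i ^ 2)) + f = f + 2 * ((2 * u : ℤ) : ZMod (pr i ^ 2)) := by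
      intro f u; push_cast; ring
    refine ⟨fun u => ?_, fun u => ?_, fun u => ?_, fun u => ?_, fun u => ?_, fun u => ?_, ?_, fun u w huw => ?_⟩
    · exact ((ok1 u u le_rfl).1.1 i).2.2.2.2.1
    · have := ((hok u 0).1.1 i).2.2.2.2.2.1
      simpa using this
    · exact ((ok1 u u le_rfl).1.1 i).2.2.2.2.2.2.1
    · rw [e4, ← rA]
      exact ((ok1 u u le_rfl).1.1 i).2.1
    · rw [add_comm (4 * (u : ZMod (pr i ^ 2))), ← rB]
      have := ((hok u 0).1.1 i).2.2.1
      simpa using this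
    · rw [e4, ← rC]
      exact ((ok1 u u le_rfl).1.1 i).2.2.2.1
    · have := ((hok 0 0).1.1 i).1
      simpa using this
    · exact ((ok1 u w huw).1.1 i).2.2.2.2.2.2.2
  choose LA LC hA0 hC0 hAP hCe hAe hup hdn using fun i : Fin (k + 1) => levels (pr_ge i) (T i)
  have z4 : ∀ i u, LA i 0 u → redp (pr i) ((A (2 * u)).1 i).1 ≠ 0 := by
    intro i u hu
    have := hA0 i u hu
    rwa [show 4 * (u : ZMod (pr i ^ 2)) + ((A 0).1 i).1 = ((A (2 * u)).1 i).1 by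
      rw [rA i (2 * u)]; push_cast; ring] at this
  have z4' : ∀ i u, LC i 0 u → redp (pr i) ((G (2 * u)).1 i).1 ≠ 0 := by
    intro i u hu
    have := hC0 i u hu
    rwa [show 4 * (u : ZMod (pr i ^ 2)) + ((G 0).1 i).1 = ((G (2 * u)).1 i).1 by
      rw [rC i (2 * u)]; push_cast; ring] at this
  -- derivations are recorded
  have key : ∀ q v, Der C q v → ∀ u, (∀ i : Fin (k + 1), LA i (v i) u) → q ∈ (A (2 * u)).2 := by
    intro q v hd
    induction hd with
    | mk c hc v w hb ha ih =>
      intro u hu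
      obtain ⟨x, hx, hxS⟩ := crt_le k (fun i => hAe i _ _ (hu i)) u
      have e1 := (ok1 u x hx).1.2.2 (fun i => (hxS i).2)
      rw [show (A (2 * u)).2 = (G (2 * x)).2 from e1]
      have hP : ∀ i : Fin (k + 1), Prog (pr i) (fun y => LA i (v i) y ∧
          detI (pr i) i ((A (2 * y)).1 i) (B (y + x) i) ((G (2 * x)).1 i) c.act) := by
        intro i
        cases hact : c.act with
        | stay =>
          rw [hact] at ha
          rw [show w = v from ha] at hxS
          exact hCe i _ _ (hxS i).1
        | up j =>
          rw [hact] at ha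
          have hw := (hxS i).1
          rw [show w = Function.update v j (v j + 1) from ha] at hw
          by_cases hij : (i : ℕ) = j
          · simp only [detI, if_pos hij]
            rw [hij, Function.update_self, ← hij] at hw
            exact hup i _ _ hw
          · simp only [detI, if_neg hij]
            rw [Function.update_of_ne hij] at hw
            exact hCe i _ _ hw
        | down j =>
          rw [hact] at ha
          have hw := (hxS i).1
          rw [show v = Function.update w j (w j + 1) from ha]
          by_cases hij : (i : ℕ) = j
          · simp only [detI, if_pos hij]
            rw [show Function.update w j (w j + 1) (i : ℕ) = w i + 1 by rw [← hij, Function.update_self]]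
            exact hdn i _ _ hw
          · simp only [detI, if_neg hij]
            rw [Function.update_of_ne hij]
            exact hCe i _ _ hw
        | zero j =>
          rw [hact] at ha
          obtain ⟨ha0, ha⟩ : v j = 0 ∧ w = v := ha
          rw [ha] at hxS
          obtain ⟨m, r, hr⟩ := hCe i _ _ (hxS i).1
          refine ⟨m, r, fun t => ⟨(hr t).1, (hr t).2, fun hij => z4 i _ ?_⟩⟩
          have := (hr t).1
          rwa [show v (i : ℕ) = 0 by rw [hij, ha0]] at this
      obtain ⟨y, hy, hyS⟩ := crt_ge k hP x
      exact (ok1 y x hy).1.2.1 c hc (fun i => (hyS i).2) (fun b hb' => ih b hb' y (fun i => (hyS i).1))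
  have ge1 : ∀ (S : ℤ → Prop) (i : Fin (k + 1)) (N : ℤ), Prog (pr i) S → ∃ u, N ≤ u ∧ S u := by
    intro S i N hS
    obtain ⟨u, hu, h⟩ := crt_ge k (S := fun j u => j = i → S u) (fun j => by
      by_cases hj : j = i
      · subst hj
        obtain ⟨m, r, h⟩ := hS
        exact ⟨m, r, fun t _ => h t⟩
      · exact ⟨0, 0, fun t h => absurd h hj⟩) N
    exact ⟨u, hu, h i rfl⟩
  have le1 : ∀ (S : ℤ → Prop) (i : Fin (k + 1)) (N : ℤ), Prog (pr i) S → ∃ u, u ≤ N ∧ S u := by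
    intro S i N hS
    obtain ⟨u, hu, h⟩ := crt_le k (S := fun j u => j = i → S u) (fun j => by
      by_cases hj : j = i
      · subst hj
        obtain ⟨m, r, h⟩ := hS
        exact ⟨m, r, fun t _ => h t⟩
      · exact ⟨0, 0, fun t h => absurd h hj⟩) N
    exact ⟨u, hu, h i rfl⟩
  have cnt : ∀ v, (∀ w, LC 0 v w → eC (2 * w) = min v (n + 1)) ∧
      (∀ u, LA 0 v u → eA (2 * u) = min v (n + 1)) := by
    intro v
    induction v with
    | zero =>
      refine ⟨fun w hw => ?_, fun u hu => ?_⟩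
      · rw [(ok1 w w le_rfl).2.2.1 (z4' 0 w hw)]; omega
      · rw [(ok1 u u le_rfl).2.1 (z4 0 u hu)]; omega
    | succ v ih =>
      have hC : ∀ w, LC 0 (v + 1) w → eC (2 * w) = min (v + 1) (n + 1) := by
        intro w hw
        obtain ⟨u, hu, h1, h2⟩ := ge1 _ 0 w (hup 0 v w hw)
        rw [(ok1 u w hu).2.2.2.2.1 h2, ih.2 u h1]; omega
      refine ⟨hC, fun u hu => ?_⟩
      obtain ⟨w, hw, h1, h2⟩ := le1 _ 0 u (hAe 0 (v + 1) u hu)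
      rw [(ok1 u w hw).2.2.2.1 h2, hC w h1]
  rintro ⟨v, hv, hd⟩
  obtain ⟨u, -, hu⟩ := crt_ge k (fun i => hAP i (v i)) 0
  refine (ok1 u u le_rfl).2.2.2.2.2 (key P v hd u hu) ?_
  have := hu 0
  rw [show v ((0 : Fin (k + 1)) : ℕ) = n from hv] at this
  rw [(cnt n).2 u this]; omega

end Tiling

end CAUE

namespace CAUE

section Existence

lemma exists_split (p : ℕ) [hp : Fact p.Prime] (N : ℤ) :
    ∃ s : ℕ × ℤ, N ≠ 0 → N = p ^ s.1 * s.2 ∧ ¬ (p : ℤ) ∣ s.2 := by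
  by_cases h : N = 0
  · exact ⟨(0, 0), fun h' => absurd h h'⟩
  · have hf : FiniteMultiplicity (p : ℤ) N := by
      rw [Int.finiteMultiplicity_iff]
      exact ⟨by simpa using hp.1.ne_one, h⟩
    obtain ⟨c, h1, h2⟩ := hf.exists_eq_pow_mul_and_not_dvd
    exact ⟨(_, c), fun _ => ⟨h1, h2⟩⟩

/-- Level of an integer. -/
noncomputable def lv (p : ℕ) [hp : Fact p.Prime] (N : ℤ) : ℕ := (exists_split p N).choose.1

/-- Unit part of an integer. -/
noncomputable def un (p : ℕ) [hp : Fact p.Prime] (N : ℤ) : ℤ := (exists_split p N).choose.2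

lemma lv_un (p : ℕ) [hp : Fact p.Prime] {N : ℤ} (h : N ≠ 0) : N = p ^ lv p N * un p N :=
  ((exists_split p N).choose_spec h).1

lemma un_ndvd (p : ℕ) [hp : Fact p.Prime] {N : ℤ} (h : N ≠ 0) : ¬ (p : ℤ) ∣ un p N :=
  ((exists_split p N).choose_spec h).2

variable {p : ℕ} [hp : Fact p.Prime]

lemma pow_split {a c : ℕ} {s z : ℤ} (h : (p : ℤ) ^ a * s = p ^ c * z) (hac : a ≤ c) :
    s = p ^ (c - a) * z := by
  obtain ⟨d, rfl⟩ := Nat.exists_eq_add_of_le hac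
  have h0 : (p : ℤ) ^ a ≠ 0 := pow_ne_zero _ (by exact_mod_cast hp.1.ne_zero)
  apply mul_left_cancel₀ h0
  rw [h, Nat.add_sub_cancel_left, pow_add, mul_assoc]

lemma pow_split_eq {a c : ℕ} {s z : ℤ} (h : (p : ℤ) ^ a * s = p ^ c * z) (hs : ¬ (p : ℤ) ∣ s)
    (hz : ¬ (p : ℤ) ∣ z) : a = c ∧ s = z := by
  have key : ∀ {a c : ℕ} {s z : ℤ}, (p : ℤ) ^ a * s = p ^ c * z → ¬ (p : ℤ) ∣ s → a ≤ c → a = c := by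
    intro a c s z h hs hac
    by_contra hne
    apply hs
    rw [pow_split h hac]
    exact (dvd_pow_self _ (by omega)).mul_right _
  have e : a = c := by
    rcases le_total a c with hac | hac
    · exact key h hs hac
    · exact (key h.symm hz hac).symm
  subst e
  have := pow_split h le_rfl
  simpa using this

lemma ndvd_add {x y : ℤ} {d : ℕ} (hd : d ≠ 0) (hx : ¬ (p : ℤ) ∣ x) : ¬ (p : ℤ) ∣ x + p ^ d * y := by
  intro h
  exact hx ((dvd_add_left ((dvd_pow_self _ hd).mul_right _)).1 h)

lemma classify {a b c : ℕ} {x y z : ℤ} (h : (p : ℤ) ^ a * x + p ^ b * y = p ^ c * z)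
    (hx : ¬ (p : ℤ) ∣ x) (hy : ¬ (p : ℤ) ∣ y) (hz : ¬ (p : ℤ) ∣ z) :
    (a < b ∧ z = x + p ^ (b - a) * y) ∨ (b < a ∧ z = y + p ^ (a - b) * x) ∨
    (a = b ∧ a ≤ c ∧ x + y = p ^ (c - a) * z) := by
  rcases lt_trichotomy a b with hab | hab | hab
  · left
    refine ⟨hab, ?_⟩
    have e : (p : ℤ) ^ a * (x + p ^ (b - a) * y) = p ^ c * z := by
      rw [← h, mul_add, ← mul_assoc, ← pow_add, Nat.add_sub_cancel' hab.le]
    exact (pow_split_eq e (ndvd_add (by omega) hx) hz).2.symm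
  · right; right
    subst hab
    rw [← mul_add] at h
    have hac : a ≤ c := by
      by_contra hlt
      push Not at hlt
      apply hz
      rw [pow_split h.symm hlt.le]
      exact (dvd_pow_self _ (by omega)).mul_right _
    exact ⟨rfl, hac, pow_split h hac⟩
  · right; left
    refine ⟨hab, ?_⟩
    have e : (p : ℤ) ^ b * (y + p ^ (a - b) * x) = p ^ c * z := by
      rw [← h, mul_add, ← mul_assoc, ← pow_add, Nat.add_sub_cancel' hab.le, add_comm]
    exact (pow_split_eq e (ndvd_add (by omega) hy) hz).2.symm

lemma cast_pp {d : ℕ} (hd : 2 ≤ d) : (p : ZMod (p ^ 2)) ^ d = 0 := by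
  obtain ⟨e, rfl⟩ := Nat.exists_eq_add_of_le hd
  have : (p : ZMod (p ^ 2)) ^ 2 = 0 := by
    rw [← Nat.cast_pow]; exact ZMod.natCast_self _
  rw [pow_add, this, zero_mul]

lemma redp_int (x : ℤ) : redp p (x : ZMod (p ^ 2)) = (x : ZMod p) := map_intCast _ _

lemma redp_pow {d : ℕ} (hd : d ≠ 0) : redp p ((p : ZMod (p ^ 2)) ^ d) = 0 := by
  rw [map_pow, redp_p, zero_pow hd]

lemma rel_of {a b c : ℕ} {x y z : ℤ} (h : (p : ℤ) ^ a * x + p ^ b * y = p ^ c * z)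
    (hx : ¬ (p : ℤ) ∣ x) (hy : ¬ (p : ℤ) ∣ y) (hz : ¬ (p : ℤ) ∣ z) :
    Rel p (x : ZMod (p ^ 2)) z y := by
  unfold Rel
  have dd : ∀ d : ℕ, d = 0 ∨ d = 1 ∨ 2 ≤ d := by omega
  rcases classify h hx hy hz with ⟨h1, h2⟩ | ⟨h1, h2⟩ | ⟨h1, h2, h3⟩
  · have e := congrArg (Int.cast : ℤ → ZMod (p ^ 2)) h2
    push_cast at e
    rcases dd (b - a) with hd | hd | hd
    · omega
    · rw [hd, pow_one] at e; tauto
    · rw [cast_pp hd, zero_mul, add_zero] at e; tauto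
  · have e := congrArg (Int.cast : ℤ → ZMod (p ^ 2)) h2
    push_cast at e
    rcases dd (a - b) with hd | hd | hd
    · omega
    · rw [hd, pow_one] at e; tauto
    · rw [cast_pp hd, zero_mul, add_zero] at e; tauto
  · have e := congrArg (Int.cast : ℤ → ZMod (p ^ 2)) h3
    push_cast at e
    rcases dd (c - a) with hd | hd | hd
    · rw [hd, pow_zero, one_mul] at e; rw [e]; tauto
    · rw [hd, pow_one] at e; rw [e]; tauto
    · rw [cast_pp hd, zero_mul] at e; tauto

lemma eq_of {a b c : ℕ} {x y z : ℤ} (h : (p : ℤ) ^ a * x + p ^ b * y = p ^ c * z)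
    (hx : ¬ (p : ℤ) ∣ x) (hy : ¬ (p : ℤ) ∣ y) (hz : ¬ (p : ℤ) ∣ z)
    (he : IsEq p (x : ZMod (p ^ 2)) z y) : a = b := by
  unfold IsEq at he
  have hx' := cast_ne hx
  have hy' := cast_ne hy
  rcases classify h hx hy hz with ⟨h1, h2⟩ | ⟨h1, h2⟩ | ⟨h1, h2, h3⟩
  · exfalso
    rw [h2] at he
    push_cast at he
    have e := congrArg (redp p) he
    simp only [map_add, map_mul, redp_pow (show b - a ≠ 0 by omega), redp_int] at e
    apply hy'
    linear_combination -e
  · exfalso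
    rw [h2] at he
    push_cast at he
    have e := congrArg (redp p) he
    simp only [map_add, map_mul, redp_pow (show a - b ≠ 0 by omega), redp_int] at e
    apply hx'
    linear_combination -e
  · exact h1

lemma succ_of {a b c : ℕ} {x y z : ℤ} (h : (p : ℤ) ^ a * x + p ^ b * y = p ^ c * z)
    (hx : ¬ (p : ℤ) ∣ x) (hy : ¬ (p : ℤ) ∣ y) (hz : ¬ (p : ℤ) ∣ z)
    (he : IsSucc p (x : ZMod (p ^ 2)) z y) : b = a + 1 := by
  obtain ⟨he, g1, g2⟩ := he
  have hx' := cast_ne hx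
  have hy' := cast_ne hy
  rw [redp_int, redp_int] at g1 g2
  rcases classify h hx hy hz with ⟨h1, h2⟩ | ⟨h1, h2⟩ | ⟨h1, h2, h3⟩
  · by_contra hne
    rw [h2] at he
    push_cast at he
    rw [cast_pp (by omega)] at he
    have e : (p : ZMod (p ^ 2)) * y = p * 0 := by linear_combination -he
    have := redp_pmul_inj e
    rw [redp_int, map_zero] at this
    exact hy' this
  · exfalso
    rw [h2] at he
    push_cast at he
    have e := congrArg (redp p) he
    simp only [map_add, map_mul, redp_pow (show a - b ≠ 0 by omega), redp_int, redp_p] at e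
    apply g2
    linear_combination -e
  · exfalso
    have e := congrArg (redp p) he
    simp only [map_add, map_mul, redp_int, redp_p] at e
    have e3 := congrArg (Int.cast : ℤ → ZMod p) h3
    push_cast at e3
    rcases Nat.eq_zero_or_pos (c - a) with hd | hd
    · rw [hd] at e3
      apply hy'
      linear_combination e3 + e
    · apply g1
      rw [e3, ZMod.natCast_self, zero_pow (by omega), zero_mul]

/-- The digit pair of an integer. -/
noncomputable def dg (p : ℕ) [hp : Fact p.Prime] (N : ℤ) : ZMod (p ^ 2) × ZMod (p ^ 2) :=
  ((N : ZMod (p ^ 2)), (un p N : ZMod (p ^ 2)))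

lemma lv_zero {N : ℤ} (h : N ≠ 0) (hr : redp p (N : ZMod (p ^ 2)) ≠ 0) :
    lv p N = 0 ∧ un p N = N := by
  rw [redp_int] at hr
  have hN : ¬ (p : ℤ) ∣ N := fun hd => hr ((ZMod.intCast_zmod_eq_zero_iff_dvd N p).2 hd)
  have e : (p : ℤ) ^ lv p N * un p N = p ^ 0 * N := by rw [← lv_un p h, pow_zero, one_mul]
  exact pow_split_eq e (un_ndvd p h) hN

lemma okD_dg {X Y Z : ℤ} (hX : X ≠ 0) (hY : Y ≠ 0) (hZ : Z ≠ 0) (h : X + Y = Z) :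
    okD p (dg p X) (dg p Z) (dg p Y) := by
  have u : ∀ {N : ℤ}, N ≠ 0 → redp p ((un p N : ℤ) : ZMod (p ^ 2)) ≠ 0 := fun hN => by
    rw [redp_int]; exact cast_ne (un_ndvd p hN)
  refine ⟨by simp [dg, ← h], fun hr => ?_, fun hr => ?_, fun hr => ?_, u hX, u hZ, u hY, ?_⟩
  · simp only [dg]; rw [(lv_zero hX hr).2]
  · simp only [dg]; rw [(lv_zero hZ hr).2]
  · simp only [dg]; rw [(lv_zero hY hr).2]
  · refine rel_of (a := lv p X) (b := lv p Y) (c := lv p Z) ?_ (un_ndvd p hX) (un_ndvd p hY) (un_ndvd p hZ)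
    rw [← lv_un p hX, ← lv_un p hY, ← lv_un p hZ, h]

lemma eq_dg {X Y Z : ℤ} (hX : X ≠ 0) (hY : Y ≠ 0) (hZ : Z ≠ 0) (h : X + Y = Z)
    (he : IsEq p (dg p X).2 (dg p Z).2 (dg p Y).2) : lv p X = lv p Y := by
  refine eq_of (c := lv p Z) ?_ (un_ndvd p hX) (un_ndvd p hY) (un_ndvd p hZ) he
  rw [← lv_un p hX, ← lv_un p hY, ← lv_un p hZ, h]

lemma succ_dg {X Y Z : ℤ} (hX : X ≠ 0) (hY : Y ≠ 0) (hZ : Z ≠ 0) (h : X + Y = Z)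
    (he : IsSucc p (dg p X).2 (dg p Z).2 (dg p Y).2) : lv p Y = lv p X + 1 := by
  refine succ_of (c := lv p Z) ?_ (un_ndvd p hX) (un_ndvd p hY) (un_ndvd p hZ) he
  rw [← lv_un p hX, ← lv_un p hY, ← lv_un p hZ, h]

/-- The vector of levels. -/
noncomputable def lvv (k : ℕ) (N : ℤ) : ℕ → ℕ := fun i => if i < k + 1 then lv (pr i) N else 0

variable {Q : Type} (C : Set (Clause Q)) (k : ℕ) (P : Q)

lemma det_sound {δ : Act} (hb : δ.bdd (k + 1)) {X Y Z : ℤ} (hX : X ≠ 0) (hY : Y ≠ 0) (hZ : Z ≠ 0)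
    (h : X + Y = Z)
    (hd : det (k := k) δ (fun i => dg (pr i) X) (fun i => dg (pr i) Z) (fun i => dg (pr i) Y)) :
    δ.app (lvv k X) (lvv k Y) := by
  have h' : Y + X = Z := by rw [← h, add_comm]
  cases δ with
  | stay =>
    funext i
    simp only [lvv]
    split_ifs with hi
    · exact (eq_dg hX hY hZ h (hd ⟨i, hi⟩)).symm
    · rfl
  | up j =>
    funext i
    have hj : j < k + 1 := hb
    by_cases hij : i = j
    · subst hij
      have := hd ⟨i, hj⟩
      simp only [detI, if_true] at this
      rw [Function.update_self]
      simp only [lvv, if_pos hj]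
      exact succ_dg hX hY hZ h this
    · rw [Function.update_of_ne hij]
      simp only [lvv]
      split_ifs with hi
      · have := hd ⟨i, hi⟩
        simp only [detI, if_neg hij] at this
        exact (eq_dg hX hY hZ h this).symm
      · rfl
  | down j =>
    funext i
    have hj : j < k + 1 := hb
    by_cases hij : i = j
    · subst hij
      have := hd ⟨i, hj⟩
      simp only [detI, if_true] at this
      rw [Function.update_self]
      simp only [lvv, if_pos hj]
      exact succ_dg hY hX hZ h' this
    · rw [Function.update_of_ne hij]
      simp only [lvv]
      split_ifs with hi
      · have := hd ⟨i, hi⟩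
        simp only [detI, if_neg hij] at this
        exact eq_dg hX hY hZ h this
      · rfl
  | zero j =>
    have hj : j < k + 1 := hb
    constructor
    · simp only [lvv, if_pos hj]
      exact (lv_zero hX ((hd ⟨j, hj⟩).2 rfl)).1
    · funext i
      simp only [lvv]
      split_ifs with hi
      · exact (eq_dg hX hY hZ h (hd ⟨i, hi⟩).1).symm
      · rfl

theorem exists_tiling (hC : ∀ c ∈ C, c.act.bdd (k + 1)) (n : ℕ)
    (hn : ¬ ∃ v : ℕ → ℕ, v 0 = n ∧ Der C P v) :
    ∃ A B G eA eC, IsTiling C k P n A B G eA eC ∧ (∀ x, eA x < n + 2) ∧ ∀ x, eC x < n + 2 := by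
  have e0 : ∀ N, lvv k N 0 = lv (pr ((0 : Fin (k + 1)) : ℕ)) N := fun N => if_pos (by omega)
  refine ⟨fun x => (fun i => dg (pr i) (2 * x + 1), {q | Der C q (lvv k (2 * x + 1))}),
    fun x => fun i => dg (pr i) (4 * x + 2),
    fun x => (fun i => dg (pr i) (2 * x + 1), {q | Der C q (lvv k (2 * x + 1))}),
    fun x => min (lvv k (2 * x + 1) 0) (n + 1), fun x => min (lvv k (2 * x + 1) 0) (n + 1),
    ⟨?_, fun x t => ?_⟩, fun x => ?_, fun x => ?_⟩
  · intro x i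
    simp only [dg]
    refine ⟨?_, ?_, ?_⟩ <;> push_cast <;> ring
  · have hX : 2 * (x + t) + 1 ≠ 0 := by omega
    have hY : 2 * (x - t) + 1 ≠ 0 := by omega
    have hZ : 4 * x + 2 ≠ 0 := by omega
    have h : (2 * (x + t) + 1) + (2 * (x - t) + 1) = 4 * x + 2 := by ring
    beta_reduce
    generalize 2 * (x + t) + 1 = X at *
    generalize 2 * (x - t) + 1 = Y at *
    generalize 4 * x + 2 = Z at *
    refine ⟨⟨fun i => okD_dg hX hY hZ h, ?_, ?_⟩, ?_⟩
    · intro c hc hd hb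
      exact Der.mk c hc _ _ (fun b hb' => hb hb') (det_sound k (hC c hc) hX hY hZ h hd)
    · intro hd
      have : lvv k Y = lvv k X := det_sound k (δ := .stay) trivial hX hY hZ h hd
      simp only [this]
    · refine ⟨fun hr => ?_, fun hr => ?_, fun he => ?_, fun he => ?_, fun hP he => ?_⟩
      · rw [e0, (lv_zero hX hr).1]; omega
      · rw [e0, (lv_zero hY hr).1]; omega
      · rw [e0, e0, eq_dg hX hY hZ h he]
      · rw [e0, e0, succ_dg hX hY hZ h he]; omega
      · exact hn ⟨lvv k X, by omega, hP⟩
  · simp only; omega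
  · simp only; omega

end Existence

end CAUE

namespace CAUE

section Coding
open Encodable

/-- The type of rules with `N + 1` states. -/
abbrev Rule (N : ℕ) : Type := Fin (N + 1) × Fin (N + 1) × Fin (N + 1) → Fin (N + 1)

lemma encode_fin_list {m : ℕ} (l : List (Fin m)) : encode l = encode (l.map Fin.val) := by
  induction l with
  | nil => rfl
  | cons a l ih => rw [List.map_cons, encode_list_cons, encode_list_cons, ih]; rfl

lemma ofFn_fintype {α β : Type} [Encodable α] [Fintype α] (f : α → β) :
    List.ofFn (fun i => f ((fintypeEquivFin (α := α)).symm i)) = (sortedUniv α).map f := by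
  apply List.ext_getElem
  · simp [length_sortedUniv]
  · intro i h1 h2
    rw [List.getElem_ofFn, List.getElem_map]
    congr 1
    rw [Equiv.symm_apply_eq]
    let _ : DecidableEq α := Encodable.decidableEqOfEncodable α
    have h3 : i < (sortedUniv α).length := by simpa using h2
    simp only [fintypeEquivFin, Equiv.trans_apply]
    rw [show ((sortedUniv_nodup α).getEquivOfForallMemList _ mem_sortedUniv).symm ((sortedUniv α)[i]) = ⟨i, h3⟩ by
      rw [Equiv.symm_apply_eq]; rfl]
    have gen : ∀ (a b : ℕ) (e : a = b) (h : i < a) (h' : i < b),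
        (⟨i, h'⟩ : Fin b) = Equiv.cast (congrArg Fin e) ⟨i, h⟩ := by
      intro a b e h h'; subst e; rfl
    exact gen _ _ (length_sortedUniv α) h3 _

lemma encode_sigma_list {m q : ℕ} (l : List (Σ _ : Fin m, Fin q)) :
    encode l = encode (l.map fun s => Nat.pair s.1 s.2) := by
  induction l with
  | nil => rfl
  | cons a l ih => rw [List.map_cons, encode_list_cons, encode_list_cons, ih]; rfl

/-- Pair each entry of a list with its index. -/
def idx (l : List ℕ) : List ℕ := (List.range l.length).map fun i => Nat.pair i (l.getD i 0)

lemma primrec_idx : Primrec idx := by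
  refine Primrec.list_map (Primrec.list_range.comp Primrec.list_length) ?_
  exact Primrec₂.natPair.comp Primrec.snd ((Primrec.list_getD 0).comp Primrec.fst Primrec.snd)

lemma encode_fun {α : Type} {m : ℕ} [Encodable α] [Fintype α] (f : α → Fin m) :
    encode f = encode (idx ((sortedUniv α).map fun a => (f a : ℕ))) := by
  have h : encode f = encode (List.ofFn (fun i => (⟨i, f ((fintypeEquivFin (α := α)).symm i)⟩ :
      Σ _ : Fin (Fintype.card α), Fin m))) := by
    rw [← List.Vector.toList_ofFn]
    show _ = encode (List.Vector.ofFn (fun i => (⟨i, f ((fintypeEquivFin (α := α)).symm i)⟩ :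
      Σ _ : Fin (Fintype.card α), Fin m)))
    rfl
  rw [h, encode_sigma_list]
  congr 1
  rw [← ofFn_fintype (fun a => (f a : ℕ))]
  apply List.ext_getElem
  · simp [idx]
  · intro i h1 h2
    have h3 : i < Fintype.card α := by simpa using h1
    simp [idx, h3]

/-- Codes of triples bounded by `N`. -/
def Valid (N c : ℕ) : Prop := c.unpair.1 ≤ N ∧ c.unpair.2.unpair.1 ≤ N ∧ c.unpair.2.unpair.2 ≤ N

instance (N c : ℕ) : Decidable (Valid N c) := by unfold Valid; infer_instance

lemma pair_le_pair {a b a' b' : ℕ} (h : a ≤ a') (h' : b ≤ b') : Nat.pair a b ≤ Nat.pair a' b' := by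
  have h1 : Nat.pair a b ≤ Nat.pair a' b := by
    rcases h.eq_or_lt with rfl | h
    · exact le_rfl
    · exact (Nat.pair_lt_pair_left _ h).le
  have h2 : Nat.pair a' b ≤ Nat.pair a' b' := by
    rcases h'.eq_or_lt with rfl | h
    · exact le_rfl
    · exact (Nat.pair_lt_pair_right _ h).le
  exact h1.trans h2

lemma sorted_codes (N : ℕ) :
    (sortedUniv (Fin (N + 1) × Fin (N + 1) × Fin (N + 1))).map encode
      = (List.range (Nat.pair N (Nat.pair N N) + 1)).filter (fun c => decide (Valid N c)) := by
  have enc : ∀ t : Fin (N + 1) × Fin (N + 1) × Fin (N + 1),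
      encode t = Nat.pair t.1 (Nat.pair t.2.1 t.2.2) := fun t => rfl
  apply List.Perm.eq_of_sortedLE
  · rw [List.sortedLE_iff_pairwise, List.pairwise_map]
    exact Finset.pairwise_sort _ (Encodable.encode' _ ⁻¹'o (· ≤ ·))
  · rw [List.sortedLE_iff_pairwise]
    exact (List.pairwise_lt_range.imp le_of_lt).filter _
  · rw [List.perm_ext_iff_of_nodup ((sortedUniv_nodup _).map encode_injective) (List.nodup_range.filter _)]
    intro c
    simp only [List.mem_map, List.mem_filter, List.mem_range, decide_eq_true_eq]
    constructor
    · rintro ⟨t, -, rfl⟩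
      rw [enc]
      refine ⟨Nat.lt_succ_of_le (pair_le_pair (by omega) (pair_le_pair (by omega) (by omega))), ?_⟩
      simp only [Valid, Nat.unpair_pair]
      omega
    · rintro ⟨-, h1, h2, h3⟩
      refine ⟨(⟨_, Nat.lt_succ_of_le h1⟩, ⟨_, Nat.lt_succ_of_le h2⟩, ⟨_, Nat.lt_succ_of_le h3⟩), mem_sortedUniv _, ?_⟩
      rw [enc]
      simp

theorem encode_rule (N : ℕ) (f : Rule N) (G : ℕ → ℕ) (h : ∀ t, ((f t : Fin (N + 1)) : ℕ) = G (encode t)) :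
    encode (⟨N, f⟩ : Σ n : ℕ, (Fin (n + 1) × Fin (n + 1) × Fin (n + 1) → Fin (n + 1)))
      = Nat.pair N (encode (idx ((List.range (Nat.pair N (Nat.pair N N) + 1)).filterMap
          (fun c => if Valid N c then some (G c) else none)))) := by
  have e1 : encode (⟨N, f⟩ : Σ n : ℕ, (Fin (n + 1) × Fin (n + 1) × Fin (n + 1) → Fin (n + 1)))
      = Nat.pair N (encode f) := rfl
  rw [e1, encode_fun]
  congr 3
  rw [show (fun a => ((f a : Fin (N + 1)) : ℕ)) = G ∘ encode from funext h, ← List.map_map, sorted_codes]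
  rw [← List.filterMap_eq_map, List.filterMap_filter]
  congr 1
  funext c
  by_cases hc : Valid N c <;> simp [hc]

lemma primrec_valid : PrimrecPred fun q : ℕ × ℕ => Valid q.1 q.2 := by
  have u1 : Primrec fun q : ℕ × ℕ => q.2.unpair.1 := Primrec.fst.comp (Primrec.unpair.comp Primrec.snd)
  have u2 : Primrec fun q : ℕ × ℕ => q.2.unpair.2 := Primrec.snd.comp (Primrec.unpair.comp Primrec.snd)
  exact (Primrec.nat_le.comp u1 Primrec.fst).and
    ((Primrec.nat_le.comp (Primrec.fst.comp (Primrec.unpair.comp u2)) Primrec.fst).and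
     (Primrec.nat_le.comp (Primrec.snd.comp (Primrec.unpair.comp u2)) Primrec.fst))

theorem primrec_encode_rule (N : ℕ → ℕ) (hN : Primrec N) (f : ∀ n, Rule (N n)) (G : ℕ → ℕ → ℕ)
    (hG : Primrec₂ G) (h : ∀ n t, ((f n t : Fin (N n + 1)) : ℕ) = G n (encode t)) :
    Primrec fun n => encode (⟨N n, f n⟩ : Σ n : ℕ, (Fin (n + 1) × Fin (n + 1) × Fin (n + 1) → Fin (n + 1))) := by
  have key : Primrec fun n => Nat.pair (N n) (encode (idx ((List.range (Nat.pair (N n) (Nat.pair (N n) (N n)) + 1)).filterMap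
          (fun c => if Valid (N n) c then some (G n c) else none)))) := by
    refine Primrec₂.natPair.comp hN (Primrec.encode.comp <| primrec_idx.comp (Primrec.listFilterMap (Primrec.list_range.comp
      (Primrec.succ.comp (Primrec₂.natPair.comp hN (Primrec₂.natPair.comp hN hN)))) ?_))
    exact Primrec.ite (primrec_valid.comp ((hN.comp Primrec.fst).pair Primrec.snd)) (Primrec.option_some.comp hG) (Primrec.const none)
  exact key.of_eq fun n => (encode_rule (N n) (f n) (G n) (h n)).symm

end Coding

end CAUE

namespace CAUE

section Machine
open Classical

variable {Q : Type} [Finite Q] (C : Set (Clause Q)) (k : ℕ) (P : Q)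

instance pr_sq_neZero (i : ℕ) : NeZero (pr i ^ 2) := ⟨pow_ne_zero _ (pr_fact i).1.ne_zero⟩

instance finite_DT : Finite (DT k) := by
  unfold DT; infer_instance

instance finite_YT : Finite (YT Q k) := by
  unfold YT; infer_instance

variable (Q) in
/-- The number of finite parts. -/
noncomputable def KK : ℕ := Nat.card (YT Q k)

variable (Q) in
lemma KK_pos : 0 < KK Q k := by
  have : Nonempty (YT Q k) := ⟨((fun _ => (0, 0), ∅), fun _ => (0, 0), (fun _ => (0, 0), ∅))⟩
  exact Nat.card_pos

/-- Numbering of finite parts. -/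
noncomputable def num (y : YT Q k) : ℕ := Finite.equivFin (YT Q k) y

variable (Q) in
/-- Inverse of the numbering. -/
noncomputable def dY (j : ℕ) : YT Q k :=
  (Finite.equivFin (YT Q k)).symm ⟨j % KK Q k, Nat.mod_lt _ (KK_pos Q k)⟩

lemma num_lt (y : YT Q k) : num k y < KK Q k := (Finite.equivFin (YT Q k) y).2

lemma dY_num (y : YT Q k) : dY Q k (num k y) = y := by
  unfold dY
  rw [Equiv.symm_apply_eq]
  exact Fin.ext (Nat.mod_eq_of_lt (num_lt k y))

lemma dY_add (j t : ℕ) : dY Q k (j + KK Q k * t) = dY Q k j := by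
  unfold dY
  simp only [Nat.add_mul_mod_self_left]

lemma tab {σ : Type} [Primcodable σ] (h : YT Q k → YT Q k → YT Q k → σ) {α : Type} [Primcodable α]
    {g₁ g₂ g₃ : α → ℕ} (h₁ : Primrec g₁) (h₂ : Primrec g₂) (h₃ : Primrec g₃) :
    Primrec fun a => h (dY Q k (g₁ a)) (dY Q k (g₂ a)) (dY Q k (g₃ a)) := by
  have hm : ∀ {g : α → ℕ}, Primrec g →
      Primrec (fun a => (⟨g a % KK Q k, Nat.mod_lt _ (KK_pos Q k)⟩ : Fin (KK Q k))) := by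
    intro g hg
    exact Primrec.fin_val_iff.1 (Primrec.nat_mod.comp hg (Primrec.const _))
  exact (Primrec.dom_finite (fun t : Fin (KK Q k) × Fin (KK Q k) × Fin (KK Q k) =>
    h ((Finite.equivFin (YT Q k)).symm t.1) ((Finite.equivFin (YT Q k)).symm t.2.1)
      ((Finite.equivFin (YT Q k)).symm t.2.2))).comp ((hm h₁).pair ((hm h₂).pair (hm h₃)))

lemma tabP (h : YT Q k → YT Q k → Prop) {α : Type} [Primcodable α]
    {g₁ g₂ : α → ℕ} (h₁ : Primrec g₁) (h₂ : Primrec g₂) :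
    PrimrecPred fun a => h (dY Q k (g₁ a)) (dY Q k (g₂ a)) :=
  Primrec.primrecPred (tab k (fun x y _ => decide (h x y)) h₁ h₂ h₂)

variable (Q) in
/-- First counter of a state. -/
noncomputable def sa (n s : ℕ) : ℕ := (s - 1) / KK Q k % (n + 2)

variable (Q) in
/-- Second counter of a state. -/
noncomputable def sc (n s : ℕ) : ℕ := (s - 1) / KK Q k / (n + 2)

/-- The code of a nonblank state. -/
noncomputable def code (n : ℕ) (y : YT Q k) (a c : ℕ) : ℕ := num k y + KK Q k * (a + (n + 2) * c) + 1

variable (Q) in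
/-- The number of nonblank states. -/
noncomputable def NN (n : ℕ) : ℕ := KK Q k * ((n + 2) * (n + 2))

lemma dY_code (n : ℕ) (y : YT Q k) (a c : ℕ) : dY Q k (code k n y a c - 1) = y := by
  rw [code, Nat.add_sub_cancel, dY_add, dY_num]

lemma code_div (n : ℕ) (y : YT Q k) (a c : ℕ) : (code k n y a c - 1) / KK Q k = a + (n + 2) * c := by
  rw [code, Nat.add_sub_cancel, Nat.add_mul_div_left _ _ (KK_pos Q k), Nat.div_eq_of_lt (num_lt k y), zero_add]

lemma sa_code {n : ℕ} (y : YT Q k) {a c : ℕ} (ha : a < n + 2) : sa Q k n (code k n y a c) = a := by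
  rw [sa, code_div, Nat.add_mul_mod_self_left, Nat.mod_eq_of_lt ha]

lemma sc_code {n : ℕ} (y : YT Q k) {a c : ℕ} (ha : a < n + 2) : sc Q k n (code k n y a c) = c := by
  rw [sc, code_div, Nat.add_mul_div_left _ _ (by omega), Nat.div_eq_of_lt ha, zero_add]

lemma sa_lt (n s : ℕ) : sa Q k n s < n + 2 := Nat.mod_lt _ (by omega)

lemma sc_lt {n s : ℕ} (h0 : s ≠ 0) (h : s ≤ NN Q k n) : sc Q k n s < n + 2 := by
  rw [sc, Nat.div_div_eq_div_mul]
  apply Nat.div_lt_of_lt_mul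
  rw [mul_assoc]
  rw [NN] at h
  omega

lemma code_le {n : ℕ} (y : YT Q k) {a c : ℕ} (ha : a < n + 2) (hc : c < n + 2) :
    code k n y a c ≤ NN Q k n := by
  have h1 := num_lt k y
  have h2 : a + (n + 2) * c + 1 ≤ (n + 2) * (n + 2) := by nlinarith
  have h3 := Nat.mul_le_mul_left (KK Q k) h2
  rw [code, NN]
  rw [mul_add, mul_one] at h3
  omega

/-- The local condition for staying alive. -/
def good (n m r : ℕ) : Prop :=
  okY C k (dY Q k (m - 1)) ∧ adjY k (dY Q k (m - 1)) (dY Q k (r - 1)) ∧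
    okE k P n (dY Q k (m - 1)) (sa Q k n m) (sc Q k n m)

/-- The local rule on numbers. -/
noncomputable def ruleN (n l m r : ℕ) : ℕ :=
  if l ≠ 0 ∧ m ≠ 0 ∧ r ≠ 0 ∧ good C k P n m r then
    code k n ((dY Q k (r - 1)).1, (dY Q k (m - 1)).2.1, (dY Q k (l - 1)).2.2) (sa Q k n r) (sc Q k n l)
  else 0

/-- The local rule. -/
noncomputable def fN (n : ℕ) : Rule (NN Q k n) :=
  fun t => ⟨ruleN C k P n t.1 t.2.1 t.2.2 % (NN Q k n + 1), Nat.mod_lt _ (Nat.succ_pos _)⟩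

lemma fN_val (n : ℕ) (l m r : Fin (NN Q k n + 1)) :
    ((fN C k P n (l, m, r) : Fin (NN Q k n + 1)) : ℕ) = ruleN C k P n l m r := by
  apply Nat.mod_eq_of_lt
  show ruleN C k P n l m r < NN Q k n + 1
  unfold ruleN
  split_ifs with h
  · exact Nat.lt_succ_of_le (code_le k _ (sa_lt k n r) (sc_lt k h.1 (Nat.le_of_lt_succ l.2)))
  · exact Nat.succ_pos _

lemma fN_blank (n : ℕ) (l m r : Fin (NN Q k n + 1)) (h : l = 0 ∨ m = 0 ∨ r = 0) :
    fN C k P n (l, m, r) = 0 := by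
  apply Fin.ext
  rw [fN_val, ruleN, if_neg]
  · rfl
  · rintro ⟨h1, h2, h3, -⟩
    rcases h with rfl | rfl | rfl
    · exact h1 rfl
    · exact h2 rfl
    · exact h3 rfl

lemma NN_primrec : Primrec (NN Q k) := by
  have : Primrec fun n : ℕ => n + 2 := Primrec.nat_add.comp Primrec.id (Primrec.const 2)
  exact Primrec.nat_mul.comp (Primrec.const _) (Primrec.nat_mul.comp this this)

lemma ruleN_primrec : Primrec fun q : ℕ × ℕ × ℕ × ℕ => ruleN C k P q.1 q.2.1 q.2.2.1 q.2.2.2 := by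
  have pn : Primrec fun q : ℕ × ℕ × ℕ × ℕ => q.1 := Primrec.fst
  have pl : Primrec fun q : ℕ × ℕ × ℕ × ℕ => q.2.1 := Primrec.fst.comp Primrec.snd
  have pm : Primrec fun q : ℕ × ℕ × ℕ × ℕ => q.2.2.1 := Primrec.fst.comp (Primrec.snd.comp Primrec.snd)
  have pr' : Primrec fun q : ℕ × ℕ × ℕ × ℕ => q.2.2.2 := Primrec.snd.comp (Primrec.snd.comp Primrec.snd)
  have n2 : Primrec fun q : ℕ × ℕ × ℕ × ℕ => q.1 + 2 := Primrec.nat_add.comp pn (Primrec.const 2)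
  have n1 : Primrec fun q : ℕ × ℕ × ℕ × ℕ => q.1 + 1 := Primrec.nat_add.comp pn (Primrec.const 1)
  have sub1 : ∀ {g : ℕ × ℕ × ℕ × ℕ → ℕ}, Primrec g → Primrec fun q => g q - 1 := fun hg =>
    Primrec.nat_sub.comp hg (Primrec.const 1)
  have psa : ∀ {g : ℕ × ℕ × ℕ × ℕ → ℕ}, Primrec g → Primrec fun q => sa Q k q.1 (g q) := fun hg =>
    Primrec.nat_mod.comp (Primrec.nat_div.comp (sub1 hg) (Primrec.const _)) n2
  have psc : ∀ {g : ℕ × ℕ × ℕ × ℕ → ℕ}, Primrec g → Primrec fun q => sc Q k q.1 (g q) := fun hg =>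
    Primrec.nat_div.comp (Primrec.nat_div.comp (sub1 hg) (Primrec.const _)) n2
  have tb : ∀ h : YT Q k → Prop, PrimrecPred fun q : ℕ × ℕ × ℕ × ℕ => h (dY Q k (q.2.2.1 - 1)) := fun h =>
    tabP k (fun y _ => h y) (sub1 pm) (sub1 pm)
  have nz : ∀ {g : ℕ × ℕ × ℕ × ℕ → ℕ}, Primrec g → PrimrecPred fun q => g q ≠ 0 := fun hg =>
    (Primrec.eq.comp hg (Primrec.const 0)).not
  have pE : PrimrecPred fun q : ℕ × ℕ × ℕ × ℕ =>
      okE k P q.1 (dY Q k (q.2.2.1 - 1)) (sa Q k q.1 q.2.2.1) (sc Q k q.1 q.2.2.1) := by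
    have e1 : PrimrecPred fun q : ℕ × ℕ × ℕ × ℕ => sa Q k q.1 q.2.2.1 = 0 := Primrec.eq.comp (psa pm) (Primrec.const 0)
    have e2 : PrimrecPred fun q : ℕ × ℕ × ℕ × ℕ => sc Q k q.1 q.2.2.1 = 0 := Primrec.eq.comp (psc pm) (Primrec.const 0)
    have e3 : PrimrecPred fun q : ℕ × ℕ × ℕ × ℕ => sa Q k q.1 q.2.2.1 = sc Q k q.1 q.2.2.1 :=
      Primrec.eq.comp (psa pm) (psc pm)
    have e4 : PrimrecPred fun q : ℕ × ℕ × ℕ × ℕ => sc Q k q.1 q.2.2.1 = min (sa Q k q.1 q.2.2.1 + 1) (q.1 + 1) :=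
      Primrec.eq.comp (psc pm) (Primrec.nat_min.comp (Primrec.nat_add.comp (psa pm) (Primrec.const 1)) n1)
    have e5 : PrimrecPred fun q : ℕ × ℕ × ℕ × ℕ => sa Q k q.1 q.2.2.1 ≠ q.1 :=
      (Primrec.eq.comp (psa pm) pn).not
    refine (((tb (fun y => ¬ redp (pr ((0 : Fin (k + 1)) : ℕ)) (y.1.1 0).1 ≠ 0)).or e1).and
      (((tb (fun y => ¬ redp (pr ((0 : Fin (k + 1)) : ℕ)) (y.2.2.1 0).1 ≠ 0)).or e2).and
      (((tb (fun y => ¬ IsEq (pr ((0 : Fin (k + 1)) : ℕ)) (y.1.1 0).2 (y.2.1 0).2 (y.2.2.1 0).2)).or e3).and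
      (((tb (fun y => ¬ IsSucc (pr ((0 : Fin (k + 1)) : ℕ)) (y.1.1 0).2 (y.2.1 0).2 (y.2.2.1 0).2)).or e4).and
      ((tb (fun y => ¬ P ∈ y.1.2)).or e5))))).of_eq ?_
    intro q
    simp only [okE, imp_iff_not_or]
  have pG : PrimrecPred fun q : ℕ × ℕ × ℕ × ℕ => good C k P q.1 q.2.2.1 q.2.2.2 :=
    (tb (okY C k)).and ((tabP k (adjY k) (sub1 pm) (sub1 pr')).and pE)
  refine Primrec.ite ((nz pl).and ((nz pm).and ((nz pr').and pG))) ?_ (Primrec.const 0)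
  refine Primrec.nat_add.comp (Primrec.nat_add.comp ?_ (Primrec.nat_mul.comp (Primrec.const _)
    (Primrec.nat_add.comp (psa pr') (Primrec.nat_mul.comp n2 (psc pl))))) (Primrec.const 1)
  exact tab k (fun x y z => num k (x.1, y.2.1, z.2.2)) (sub1 pr') (sub1 pm) (sub1 pl)

theorem primrec_fN : Primrec fun n => Encodable.encode (⟨NN Q k n, fN C k P n⟩ :
    Σ n : ℕ, (Fin (n + 1) × Fin (n + 1) × Fin (n + 1) → Fin (n + 1))) := by
  refine primrec_encode_rule (NN Q k) (NN_primrec k) (fN C k P)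
    (fun n c => ruleN C k P n c.unpair.1 c.unpair.2.unpair.1 c.unpair.2.unpair.2) ?_ ?_
  · have u1 : Primrec fun q : ℕ × ℕ => q.2.unpair.1 := Primrec.fst.comp (Primrec.unpair.comp Primrec.snd)
    have u2 : Primrec fun q : ℕ × ℕ => q.2.unpair.2 := Primrec.snd.comp (Primrec.unpair.comp Primrec.snd)
    exact (ruleN_primrec C k P).comp (Primrec.fst.pair (u1.pair ((Primrec.fst.comp (Primrec.unpair.comp u2)).pair
      (Primrec.snd.comp (Primrec.unpair.comp u2)))))
  · rintro n ⟨l, m, r⟩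
    rw [fN_val]
    have : Encodable.encode (l, m, r) = Nat.pair l (Nat.pair m r) := rfl
    simp only [this, Nat.unpair_pair]

lemma iter_val (n : ℕ) (x : ℤ → Fin (NN Q k n + 1)) (N : ℕ) (i : ℤ) :
    (((caOfRule (fN C k P n))^[N + 1] x i : Fin (NN Q k n + 1)) : ℕ)
      = ruleN C k P n ((caOfRule (fN C k P n))^[N] x (i - 1)) ((caOfRule (fN C k P n))^[N] x i)
        ((caOfRule (fN C k P n))^[N] x (i + 1)) := by
  rw [Function.iterate_succ_apply', caOfRule, fN_val]

theorem tiling_of_immortal (n : ℕ) (x : ℤ → Fin (NN Q k n + 1))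
    (h : ∀ N i, ((caOfRule (fN C k P n))^[N] x) i ≠ 0) :
    ∃ A B G eA eC, IsTiling C k P n A B G eA eC := by
  obtain ⟨X, hX⟩ : ∃ X : ℕ → ℤ → ℕ, ∀ N i, X N i = (((caOfRule (fN C k P n))^[N] x i : Fin (NN Q k n + 1)) : ℕ) :=
    ⟨_, fun _ _ => rfl⟩
  have hX0 : ∀ N i, X N i ≠ 0 := by
    intro N i h0
    rw [hX] at h0
    exact h N i (Fin.ext h0)
  have hstep : ∀ N i, X (N + 1) i = ruleN C k P n (X N (i - 1)) (X N i) (X N (i + 1)) := by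
    intro N i
    rw [hX, iter_val, ← hX, ← hX, ← hX]
  have hgood : ∀ N i, good C k P n (X N i) (X N (i + 1)) ∧
      X (N + 1) i = code k n ((dY Q k (X N (i + 1) - 1)).1, (dY Q k (X N i - 1)).2.1,
        (dY Q k (X N (i - 1) - 1)).2.2) (sa Q k n (X N (i + 1))) (sc Q k n (X N (i - 1))) := by
    intro N i
    have h1 := hstep N i
    have h2 := hX0 (N + 1) i
    rw [h1, ruleN] at h2
    rw [ruleN] at h1
    split_ifs at h1 h2 with hc
    · exact ⟨hc.2.2.2, h1⟩
    · exact absurd rfl h2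
  clear hstep hX h
  have tr : ∀ N : ℕ, ∀ i : ℤ, (dY Q k (X N i - 1)).1 = (dY Q k (X 0 (i + N) - 1)).1 ∧
      (dY Q k (X N i - 1)).2.1 = (dY Q k (X 0 i - 1)).2.1 ∧
      (dY Q k (X N i - 1)).2.2 = (dY Q k (X 0 (i - N) - 1)).2.2 ∧
      sa Q k n (X N i) = sa Q k n (X 0 (i + N)) ∧ sc Q k n (X N i) = sc Q k n (X 0 (i - N)) := by
    intro N
    induction N with
    | zero => intro i; simp
    | succ N ih =>
      intro i
      have hc := (hgood N i).2
      have h1 := ih (i + 1)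
      have h3 := ih (i - 1)
      rw [show i + 1 + (N : ℤ) = i + ((N + 1 : ℕ) : ℤ) by push_cast; ring] at h1
      rw [show i - 1 - (N : ℤ) = i - ((N + 1 : ℕ) : ℤ) by push_cast; ring] at h3
      rw [hc, dY_code, sa_code k _ (sa_lt k n _), sc_code k _ (sa_lt k n _)]
      exact ⟨h1.1, (ih i).2.1, h3.2.2.1, h1.2.2.2.1, h3.2.2.2.2⟩
  refine ⟨fun i => (dY Q k (X 0 i - 1)).1, fun i => (dY Q k (X 0 i - 1)).2.1,
    fun i => (dY Q k (X 0 i - 1)).2.2, fun i => sa Q k n (X 0 i), fun i => sc Q k n (X 0 i), ?_, ?_⟩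
  · intro i
    exact (hgood 0 i).1.2.1
  · intro i t
    obtain ⟨t1, t2, t3, t4, t5⟩ := tr t i
    have hg := (hgood t i).1
    simp only
    rw [← t1, ← t2, ← t3, ← t4, ← t5]
    exact ⟨hg.1, hg.2.2⟩

theorem immortal_of_tiling (n : ℕ) {A : ℤ → DT k × Set Q} {B : ℤ → DT k} {G : ℤ → DT k × Set Q}
    {eA eC : ℤ → ℕ} (h : IsTiling C k P n A B G eA eC) (hA : ∀ x, eA x < n + 2) (hC : ∀ x, eC x < n + 2) :
    ∃ x : ℤ → Fin (NN Q k n + 1), ∀ N i, ((caOfRule (fN C k P n))^[N] x) i ≠ 0 := by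
  obtain ⟨hadj, hok⟩ := h
  obtain ⟨x, hx⟩ : ∃ x : ℤ → Fin (NN Q k n + 1), ∀ i, (x i : ℕ) = code k n (A i, B i, G i) (eA i) (eC i) :=
    ⟨fun i => ⟨_, Nat.lt_succ_of_le (code_le k (A i, B i, G i) (hA i) (hC i))⟩, fun i => rfl⟩
  have key : ∀ N : ℕ, ∀ i : ℤ, (((caOfRule (fN C k P n))^[N] x i : Fin (NN Q k n + 1)) : ℕ)
      = code k n (A (i + N), B i, G (i - N)) (eA (i + N)) (eC (i - N)) := by
    intro N
    induction N with
    | zero => intro i; simpa using hx i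
    | succ N ih =>
      intro i
      rw [iter_val, ih, ih, ih, ruleN, if_pos]
      · simp only [dY_code, sa_code k _ (hA _), sc_code k _ (hA _)]
        rw [show i + 1 + (N : ℤ) = i + ((N + 1 : ℕ) : ℤ) by push_cast; ring,
          show i - 1 - (N : ℤ) = i - ((N + 1 : ℕ) : ℤ) by push_cast; ring]
      · refine ⟨Nat.succ_ne_zero _, Nat.succ_ne_zero _, Nat.succ_ne_zero _, ?_⟩
        rw [good, dY_code, dY_code, sa_code k _ (hA _), sc_code k _ (hA _)]
        refine ⟨(hok i N).1, ?_, (hok i N).2⟩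
        intro j
        rw [show i + 1 + (N : ℤ) = i + N + 1 by ring, show i + 1 - (N : ℤ) = i - N + 1 by ring]
        exact ⟨(hadj (i + N) j).1, (hadj i j).2.1, (hadj (i - N) j).2.2⟩
  refine ⟨x, fun N i h0 => ?_⟩
  have := key N i
  rw [h0] at this
  exact absurd this.symm (Nat.succ_ne_zero _)

end Machine

end CAUE

theorem uniquelyErgodic_undecidable :
    ¬ ∃ g : ℕ → Bool, Computable g ∧
      ∀ (n : ℕ) (f : Fin (n + 1) × Fin (n + 1) × Fin (n + 1) → Fin (n + 1)),
        f (0, 0, 0) = 0 →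
        (g (Encodable.encode
            (⟨n, f⟩ : Σ n : ℕ, (Fin (n + 1) × Fin (n + 1) × Fin (n + 1) → Fin (n + 1))))
            = true ↔
          (∃! μ : Measure (ℤ → Fin (n + 1)), IsProbabilityMeasure μ ∧
            ∀ A : Set (ℤ → Fin (n + 1)), MeasurableSet A →
              μ (caOfRule f ⁻¹' A) = μ A)) := by
  rintro ⟨g, hg, hgs⟩
  obtain ⟨Q, hQ, C, k', P, hC, hk, hhalt⟩ := CAUE.halting_horn
  obtain ⟨k, rfl⟩ : ∃ k, k' = k + 1 := ⟨k' - 1, by omega⟩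
  refine ComputablePred.halting_problem 0 ?_
  have hcomp : Computable fun c : Nat.Partrec.Code => g (Encodable.encode
      (⟨CAUE.NN Q k (Encodable.encode c), CAUE.fN C k P (Encodable.encode c)⟩ :
        Σ n : ℕ, (Fin (n + 1) × Fin (n + 1) × Fin (n + 1) → Fin (n + 1)))) :=
    hg.comp ((CAUE.primrec_fN C k P).to_comp.comp Computable.encode)
  refine ComputablePred.computable_iff.2 ⟨_, hcomp, ?_⟩
  funext c
  apply propext
  rw [hgs _ _ (CAUE.fN_blank C k P _ 0 0 0 (Or.inl rfl)),
    CAUE.uniquely_ergodic_iff _ (CAUE.fN_blank C k P _), hhalt c]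
  constructor
  · rintro hv ⟨x, hx⟩
    obtain ⟨A, B, G, eA, eC, hT⟩ := CAUE.tiling_of_immortal C k P _ x hx
    exact CAUE.forced C k P _ hT hv
  · intro hx
    by_contra hv
    obtain ⟨A, B, G, eA, eC, hT, h1, h2⟩ := CAUE.exists_tiling C k P hC _ hv
    exact hx (CAUE.immortal_of_tiling C k P _ hT h1 h2)
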